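/- arXiv:math/0703792 — 8 statements merged into one kernel-verified Lean document; each statement's English description precedes it below -/
import Mathlib

section
/- Let M be a 3×3 matrix with nonnegative integer entries belonging to E(3,ℕ). Then the row vector (1, −1, 1) is a left eigenvector of M: there exists a nonzero integer c such that (1, −1, 1) · M = c · (1, −1, 1). -/
/-!
The vector `v = (1, -1, 1)` spans the left kernel of `E`. Hence `(v M) E Mᵀ = ± v E = 0`, and
since `det M ≠ 0` this forces `(v M) E = 0`, so `v M` is a multiple of `v`. The multiple is nonzero
because `M` is nonsingular and `v ≠ 0`.
-/

open Matrix
/-- The matrix E from the paper. -/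
def Emat : Matrix (Fin 3) (Fin 3) ℤ := !![0, 1, 1; -1, 0, 1; -1, -1, 0]

/-- The monoid E(3,ℕ): 3×3 matrices with nonnegative integer entries such that
M · E · Mᵀ = ±E and det M = ±1. -/
def E3N : Set (Matrix (Fin 3) (Fin 3) ℤ) :=
  {M | (∀ i j, 0 ≤ M i j) ∧
    (M * Emat * Mᵀ = Emat ∨ M * Emat * Mᵀ = -Emat) ∧
    (M.det = 1 ∨ M.det = -1)}

/-- If M ∈ E(3,ℕ), then (1,−1,1) is a left eigenvector of M. -/
theorem left_eigenvector_of_mem_E3N (M : Matrix (Fin 3) (Fin 3) ℤ) (hM : M ∈ E3N) :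
    ∃ c : ℤ, c ≠ 0 ∧ Matrix.vecMul ![1, -1, 1] M = c • ![1, -1, 1] := by
  obtain ⟨-, hE, hdet⟩ := hM
  have hd : M.det ≠ 0 := by rcases hdet with h | h <;> simp [h]
  have hv : ![1, -1, 1] ᵥ* Emat = 0 := by decide
  have hwM : (![1, -1, 1] ᵥ* M ᵥ* Emat) ᵥ* Mᵀ = 0 := by
    rw [vecMul_vecMul, vecMul_vecMul, ← Matrix.mul_assoc]
    rcases hE with h | h <;> simp only [h, vecMul_neg, hv, neg_zero]
  have hw := eq_zero_of_vecMul_eq_zero (by rwa [det_transpose]) hwM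
  have hne : ![1, -1, 1] ᵥ* M ≠ 0 := fun h => by
    have := congrFun (eq_zero_of_vecMul_eq_zero hd h) 0
    simp at this
  generalize ![1, -1, 1] ᵥ* M = w at hw hne ⊢
  have h1 := congrFun hw 1
  have h2 := congrFun hw 2
  simp [Emat, vecMul, dotProduct, Fin.sum_univ_three] at h1 h2
  have hw' : w = w 0 • ![1, -1, 1] := by
    ext i
    fin_cases i <;> simp <;> linarith
  refine ⟨w 0, fun h => hne ?_, hw'⟩
  rw [hw', h, zero_smul]
end

section
/- The units of the monoid E(3,ℕ) are exactly the 3×3 identity matrix and the matrix P = ![![0,0,1],![0,1,0],![1,0,0]]: a matrix U ∈ E(3,ℕ) is a unit of E(3,ℕ) if and only if U is the identity or U = P. -/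
open Matrix

/-- The permutation matrix P. -/
def Pmat : Matrix (Fin 3) (Fin 3) ℤ := !![0, 0, 1; 0, 1, 0; 1, 0, 0]

/-- U is a unit of the (multiplicative) monoid given by the set S:
for every A ∈ S there are B, C ∈ S with A = B·U and A = U·C. -/
def IsUnitOf (S : Set (Matrix (Fin 3) (Fin 3) ℤ)) (U : Matrix (Fin 3) (Fin 3) ℤ) : Prop :=
  U ∈ S ∧ ∀ A ∈ S, (∃ B ∈ S, A = B * U) ∧ (∃ C ∈ S, A = U * C)

/-- A row of a nonnegative integer matrix with nonnegative inverse is a standard basis vector: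
since `∑ k, U i k * C k i = 1`, some `k` has `U i k` and `C k i` both positive. The vanishing
off-diagonal entries of `U * C` then leave `C k i` as the only nonzero entry in row `k` of `C`,
so `C * U = 1` reads `C k i * U i l = δ_{kl}`. -/
theorem row_eq_single {U C : Matrix (Fin 3) (Fin 3) ℤ} (hU : ∀ i j, 0 ≤ U i j)
    (hC : ∀ i j, 0 ≤ C i j) (h1 : U * C = 1) (h2 : C * U = 1) (i : Fin 3) :
    ∃ k, U i = Pi.single k 1 := by
  have hUC : ∀ a b, ∑ k, U a k * C k b = (1 : Matrix (Fin 3) (Fin 3) ℤ) a b := fun a b => by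
    rw [← h1, Matrix.mul_apply]
  have hCU : ∀ a b, ∑ k, C a k * U k b = (1 : Matrix (Fin 3) (Fin 3) ℤ) a b := fun a b => by
    rw [← h2, Matrix.mul_apply]
  obtain ⟨k, -, hk⟩ : ∃ k ∈ Finset.univ, U i k * C k i ≠ 0 := by
    apply Finset.exists_ne_zero_of_sum_ne_zero
    rw [hUC i i]
    simp
  have hUk : U i k ≠ 0 := left_ne_zero_of_mul hk
  have hCk : C k i ≠ 0 := right_ne_zero_of_mul hk
  have hzero : ∀ j, j ≠ i → C k j = 0 := by
    intro j hj
    have h := hUC i j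
    rw [Matrix.one_apply_ne hj.symm,
      Finset.sum_eq_zero_iff_of_nonneg (fun l _ => mul_nonneg (hU i l) (hC l j))] at h
    exact (mul_eq_zero.mp (h k (Finset.mem_univ k))).resolve_left hUk
  have hrow : ∀ l, C k i * U i l = (1 : Matrix (Fin 3) (Fin 3) ℤ) k l := by
    intro l
    rw [← hCU k l, Finset.sum_eq_single i]
    · intro j _ hj
      rw [hzero j hj, zero_mul]
    · simp
  refine ⟨k, funext fun l => ?_⟩
  by_cases hl : l = k
  · subst hl
    have h := hrow l
    rw [Matrix.one_apply_eq] at h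
    rw [Pi.single_eq_same]
    exact Int.eq_one_of_mul_eq_one_left (hU i l) h
  · have h := hrow l
    rw [Matrix.one_apply_ne (Ne.symm hl)] at h
    rw [Pi.single_eq_of_ne hl]
    exact (mul_eq_zero.mp h).resolve_left hCk

theorem single_rows_cases : ∀ a b c : Fin 3,
    let U : Matrix (Fin 3) (Fin 3) ℤ :=
      Matrix.of ![Pi.single a 1, Pi.single b 1, Pi.single c 1]
    (U * Emat * Uᵀ = Emat ∨ U * Emat * Uᵀ = -Emat) → U = 1 ∨ U = Pmat := by
  decide +kernel

theorem one_mem_E3N : (1 : Matrix (Fin 3) (Fin 3) ℤ) ∈ E3N := by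
  refine ⟨?_, Or.inl ?_, Or.inl ?_⟩
  · intro i j
    fin_cases i <;> fin_cases j <;> simp
  · simp
  · simp

theorem Pmat_mem_E3N : Pmat ∈ E3N := by
  refine ⟨?_, Or.inr ?_, Or.inr ?_⟩
  · intro i j
    fin_cases i <;> fin_cases j <;> simp [Pmat]
  · decide +kernel
  · simp [Pmat, Matrix.det_fin_three]

theorem Pmat_mul_Pmat : Pmat * Pmat = 1 := by
  decide +kernel

theorem mul_mem_E3N {A B : Matrix (Fin 3) (Fin 3) ℤ} (hA : A ∈ E3N) (hB : B ∈ E3N) :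
    A * B ∈ E3N := by
  obtain ⟨hA0, hAE, hAd⟩ := hA
  obtain ⟨hB0, hBE, hBd⟩ := hB
  refine ⟨fun i j => ?_, ?_, ?_⟩
  · rw [Matrix.mul_apply]
    exact Finset.sum_nonneg fun k _ => mul_nonneg (hA0 i k) (hB0 k j)
  · have h : A * B * Emat * (A * B)ᵀ = A * (B * Emat * Bᵀ) * Aᵀ := by
      rw [Matrix.transpose_mul]
      simp only [Matrix.mul_assoc]
    rw [h]
    rcases hAE with hAE | hAE <;> rcases hBE with hBE | hBE <;> simp [hAE, hBE]
  · rw [Matrix.det_mul]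
    rcases hAd with hAd | hAd <;> rcases hBd with hBd | hBd <;> simp [hAd, hBd]

/-- The units of E(3,ℕ) are exactly the identity matrix and P. -/
theorem units_of_E3N (U : Matrix (Fin 3) (Fin 3) ℤ) (hU : U ∈ E3N) :
    IsUnitOf E3N U ↔ (U = 1 ∨ U = Pmat) := by
  constructor
  · rintro ⟨-, h⟩
    obtain ⟨-, C, hC, hUC⟩ := h 1 one_mem_E3N
    have hrow := row_eq_single hU.1 hC.1 hUC.symm (mul_eq_one_comm.mp hUC.symm)
    obtain ⟨a, ha⟩ := hrow 0
    obtain ⟨b, hb⟩ := hrow 1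
    obtain ⟨c, hc⟩ := hrow 2
    have hUeq : U = Matrix.of ![Pi.single a 1, Pi.single b 1, Pi.single c 1] := by
      funext i
      fin_cases i
      · exact ha
      · exact hb
      · exact hc
    have hE := hU.2.1
    rw [hUeq] at hE ⊢
    exact single_rows_cases a b c hE
  · rintro (rfl | rfl)
    · exact ⟨hU, fun A hA => ⟨⟨A, hA, (mul_one A).symm⟩, ⟨A, hA, (one_mul A).symm⟩⟩⟩
    · refine ⟨hU, fun A hA => ⟨⟨A * Pmat, mul_mem_E3N hA hU, ?_⟩,
        ⟨Pmat * A, mul_mem_E3N hU hA, ?_⟩⟩⟩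
      · rw [mul_assoc, Pmat_mul_Pmat, mul_one]
      · rw [← mul_assoc, Pmat_mul_Pmat, one_mul]
end

section
/- For every integer k ≥ 1, the matrix M̃_k = ![![k−1,0,k],![k,0,k+1],![0,1,0]] is non-decomposable in E(3,ℕ): whenever M̃_k = A · B with A, B ∈ E(3,ℕ), then A or B is a unit of E(3,ℕ) (i.e., A or B equals the identity matrix or P). -/
/-!
The vector `(1, -1, 1)` spans the kernel of `E`, so every `M ∈ E(3,ℕ)` satisfies
`row₁ - row₂ + row₃ = c (1, -1, 1)` for some integer `c` (`E3N.alternating_rows`).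

Let `M̃_k = A B`. The last row of `M̃_k` is `e₂` and its middle column is `e₃`. As all entries are
nonnegative and no row of `B` or column of `A` vanishes, there is an index `j` such that the last
row of `A` is `e_j`, the `j`-th column of `A` is `e₃`, the `j`-th row of `B` is `e₂` and the middle
column of `B` is `e_j` (`exists_pivot`). If `j` is the middle index, the alternating relation for
`B` forces its first and third rows to add up to `(1, 0, 1)`, so `B` is `1` or `P`. Otherwise the
alternating relation for `A` leaves a block with determinant `±(x + y + 1)`, `x, y ≥ 0`, so
`x = y = 0` and `A` is `P` or `1`.
-/

open Matrix

/-- The matrix M̃_k. -/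
def Mtk (k : ℤ) : Matrix (Fin 3) (Fin 3) ℤ := !![k - 1, 0, k; k, 0, k + 1; 0, 1, 0]

/-- The kernel vector `(1, -1, 1)` of `E` is an eigenvector of `Mᵀ`: the alternating sum of
the rows of `M` is a multiple of it. -/
theorem E3N.alternating_rows {M : Matrix (Fin 3) (Fin 3) ℤ} (hM : M ∈ E3N) :
    M 0 1 - M 1 1 + M 2 1 = -(M 0 0 - M 1 0 + M 2 0) ∧
      M 0 2 - M 1 2 + M 2 2 = M 0 0 - M 1 0 + M 2 0 := by
  obtain ⟨-, hE, hd⟩ := hM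
  have hd0 : M.det ≠ 0 := by rcases hd with h | h <;> simp [h]
  have hv : Emat *ᵥ ![1, -1, 1] = 0 := by decide
  have h0 : M *ᵥ (Emat *ᵥ (Mᵀ *ᵥ ![1, -1, 1])) = 0 := by
    rw [mulVec_mulVec, mulVec_mulVec]
    rcases hE with h | h <;> rw [h]
    · exact hv
    · rw [neg_mulVec, hv, neg_zero]
  have h1 := eq_zero_of_mulVec_eq_zero hd0 h0
  have e1 := congrFun h1 1
  have e2 := congrFun h1 2
  simp [Emat, mulVec, dotProduct, Fin.sum_univ_three] at e1 e2
  constructor <;> linarith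

/-- A unit entry, isolated by zeros, of a product of nonnegative nonsingular integer matrices
comes from a single pair of entries that are isolated by zeros in the two factors. -/
theorem exists_pivot {A B : Matrix (Fin 3) (Fin 3) ℤ} (hA : ∀ i j, 0 ≤ A i j)
    (hB : ∀ i j, 0 ≤ B i j) (hdA : A.det ≠ 0) (hdB : B.det ≠ 0) {r s : Fin 3}
    (h1 : (A * B) r s = 1) (hrow : ∀ l, l ≠ s → (A * B) r l = 0)
    (hcol : ∀ i, i ≠ r → (A * B) i s = 0) :
    ∃ j, A r j = 1 ∧ B j s = 1 ∧ (∀ l, l ≠ j → A r l = 0 ∧ B l s = 0) ∧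
      (∀ l, l ≠ s → B j l = 0) ∧ (∀ i, i ≠ r → A i j = 0) := by
  have hnn : ∀ i j l, 0 ≤ A i j * B j l := fun i j l => mul_nonneg (hA i j) (hB j l)
  have hz : ∀ i l, (A * B) i l = 0 → ∀ j, A i j = 0 ∨ B j l = 0 := by
    intro i l h j
    rw [Matrix.mul_apply, Finset.sum_eq_zero_iff_of_nonneg (fun j _ => hnn i j l)] at h
    exact mul_eq_zero.1 (h j (Finset.mem_univ j))
  have hr := fun l hl => hz r l (hrow l hl)
  have hc := fun i hi => hz i s (hcol i hi)
  rw [Matrix.mul_apply] at h1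
  obtain ⟨j, -, hj⟩ : ∃ j ∈ Finset.univ, A r j * B j s ≠ 0 :=
    Finset.exists_ne_zero_of_sum_ne_zero (by rw [h1]; exact one_ne_zero)
  have hsplit := Finset.add_sum_erase Finset.univ (fun j => A r j * B j s) (Finset.mem_univ j)
  have hrest : 0 ≤ ∑ l ∈ Finset.univ.erase j, A r l * B l s :=
    Finset.sum_nonneg fun l _ => hnn r l s
  have hpos : 0 < A r j * B j s := lt_of_le_of_ne (hnn r j s) hj.symm
  have hj1 : A r j * B j s = 1 := by simp only [h1] at hsplit; omega
  have hrest0 : ∑ l ∈ Finset.univ.erase j, A r l * B l s = 0 := by simp only [h1] at hsplit; omega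
  rw [Finset.sum_eq_zero_iff_of_nonneg (fun l _ => hnn r l s)] at hrest0
  have hj2 : B j s * A r j = 1 := by rw [mul_comm]; exact hj1
  refine ⟨j, Int.eq_one_of_mul_eq_one_right (hA r j) hj1,
    Int.eq_one_of_mul_eq_one_right (hB j s) hj2, ?_, ?_, ?_⟩
  · intro l hl
    have h0 := mul_eq_zero.1 (hrest0 l (Finset.mem_erase.2 ⟨hl, Finset.mem_univ l⟩))
    constructor
    · -- otherwise the `l`-th row of `B` vanishes
      by_contra hne
      refine hdB (det_eq_zero_of_row_eq_zero l fun m => ?_)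
      by_cases hm : m = s
      · subst hm; exact h0.resolve_left hne
      · exact (hr m hm l).resolve_left hne
    · -- otherwise the `l`-th column of `A` vanishes
      by_contra hne
      refine hdA (det_eq_zero_of_column_eq_zero l fun m => ?_)
      by_cases hm : m = r
      · subst hm; exact h0.resolve_right hne
      · exact (hc m hm l).resolve_right hne
  · exact fun l hl => (hr l hl j).resolve_left (left_ne_zero_of_mul hj)
  · exact fun i hi => (hc i hi j).resolve_right (right_ne_zero_of_mul hj)

/-- For every k ≥ 1, the matrix M̃_k is non-decomposable in E(3,ℕ): whenever
M̃_k = A · B with A, B ∈ E(3,ℕ), then A or B is a unit of E(3,ℕ), i.e. equals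
the identity matrix or P. -/
theorem Mtk_nondecomposable (k : ℤ) (hk : 1 ≤ k) (A B : Matrix (Fin 3) (Fin 3) ℤ)
    (hA : A ∈ E3N) (hB : B ∈ E3N) (h : Mtk k = A * B) :
    (A = 1 ∨ A = Pmat) ∨ (B = 1 ∨ B = Pmat) := by
  obtain ⟨a1, a2⟩ := E3N.alternating_rows hA
  obtain ⟨b1, b2⟩ := E3N.alternating_rows hB
  obtain ⟨nA, -, dA⟩ := hA
  obtain ⟨nB, -, dB⟩ := hB
  obtain ⟨j, h1, h2, h3, h4, h5⟩ := exists_pivot (r := 2) (s := 1) nA nB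
    (by rcases dA with h | h <;> simp [h]) (by rcases dB with h | h <;> simp [h])
    (by rw [← h]; simp [Mtk])
    (by rw [← h]; intro l hl; fin_cases l <;> simp_all [Mtk])
    (by rw [← h]; intro l hl; fin_cases l <;> simp_all [Mtk])
  have p1 := h4 0 (by decide)
  have p2 := h4 2 (by decide)
  have p3 := h5 0 (by decide)
  have p4 := h5 1 (by decide)
  rw [det_fin_three] at dA dB
  have nA00 := nA 0 0
  have nA01 := nA 0 1
  have nA02 := nA 0 2
  have nA10 := nA 1 0
  have nA11 := nA 1 1
  have nA12 := nA 1 2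
  fin_cases j <;> simp only [Fin.zero_eta, Fin.mk_one, Fin.reduceFinMk] at *
  · -- `A` has rows `(0, y, z + 1)`, `(0, y + 1, z)`, `(1, 0, 0)`
    obtain ⟨q1, -⟩ := h3 1 (by decide)
    obtain ⟨q2, -⟩ := h3 2 (by decide)
    have e1 : A 1 1 = A 0 1 + 1 := by linarith
    have e2 : A 0 2 = A 1 2 + 1 := by linarith
    simp only [h1, p3, p4, q1, q2, e1, e2] at dA
    ring_nf at dA
    left; right
    ext i l
    fin_cases i <;> fin_cases l <;> simp [Pmat] <;> omega
  · obtain ⟨-, q1⟩ := h3 0 (by decide)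
    obtain ⟨-, q2⟩ := h3 2 (by decide)
    have e1 : B 2 0 = 1 - B 0 0 := by linarith
    have e2 : B 2 2 = 1 - B 0 2 := by linarith
    simp only [h2, p1, p2, q1, q2, e1, e2] at dB
    ring_nf at dB
    have nB00 := nB 0 0
    have nB02 := nB 0 2
    have nB20 := nB 2 0
    have nB22 := nB 2 2
    right
    -- `dB` rules out that the first row of `B` is `(0, 0, 0)` or `(1, 0, 1)`
    have hcase : (B 0 0 = 1 ∧ B 0 2 = 0) ∨ (B 0 0 = 0 ∧ B 0 2 = 1) := by omega
    rcases hcase with ⟨c1, c2⟩ | ⟨c1, c2⟩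
    · left
      ext i l
      fin_cases i <;> fin_cases l <;> simp <;> omega
    · right
      ext i l
      fin_cases i <;> fin_cases l <;> simp [Pmat] <;> omega
  · -- `A` has rows `(x + 1, y, 0)`, `(x, y + 1, 0)`, `(0, 0, 1)`
    obtain ⟨q1, -⟩ := h3 0 (by decide)
    obtain ⟨q2, -⟩ := h3 1 (by decide)
    have e1 : A 1 1 = A 0 1 + 1 := by linarith
    have e2 : A 0 0 = A 1 0 + 1 := by linarith
    simp only [h1, p3, p4, q1, q2, e1, e2] at dA
    ring_nf at dA
    left; left
    ext i l
    fin_cases i <;> fin_cases l <;> simp <;> omega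
end

section
/- The monoid E(3,ℕ) is not finitely generated: there is no finite set S of 3×3 integer matrices contained in E(3,ℕ) such that every element of E(3,ℕ) is a product of finitely many elements of S (equivalently, such that the submonoid of the multiplicative monoid of 3×3 integer matrices generated by S equals E(3,ℕ)). -/
/-!
Every `M ∈ E(3,ℕ)` satisfies `r₀ - r₁ + r₂ = ±(1, -1, 1)` on its rows, because `(1, -1, 1)` spans the
kernel of `E`, and its outer rows satisfy `r₀ E r₂ᵀ = ±1` (`E3N_rows`). With these constraints the
matrices

  `familyMat n = [[0, 1, 0], [n+1, 0, n+2], [n, 0, n+1]]`, `n ∈ ℕ`,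

are irreducible in `E(3,ℕ)`: the first row of a factorization `X * Y = familyMat n` forces the first
row of `X` to be a standard basis vector `eᵢ` and the `i`-th row of `Y` to be `(0, 1, 0)`, and in each
of the three cases one of the factors is `1` or the reversal `flipMat` (`familyMat_irreducible`).

The sum of the entries is unchanged on multiplying by `1` or `flipMat` on either side, and is bounded
on a finite set `S`, whereas it equals `4 * n + 5` on `familyMat n`. So for large `n` no element of
`S` is `familyMat n` up to these units; by irreducibility the same holds for products of elements
of `S`.
-/

open Matrix

/-- The permutation matrix reversing the three coordinates, the nontrivial unit of `E(3,ℕ)`. -/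
def flipMat : Matrix (Fin 3) (Fin 3) ℤ := !![0, 0, 1; 0, 1, 0; 1, 0, 0]

/-- An infinite family of irreducible elements of `E(3,ℕ)`. -/
def familyMat (n : ℕ) : Matrix (Fin 3) (Fin 3) ℤ :=
  !![0, 1, 0; (n : ℤ) + 1, 0, (n : ℤ) + 2; (n : ℤ), 0, (n : ℤ) + 1]

/-- `U` is one of the two units `1`, `flipMat` of `E(3,ℕ)`. -/
def IsFlip (U : Matrix (Fin 3) (Fin 3) ℤ) : Prop := U = 1 ∨ U = flipMat

/-- The sum of all entries of a matrix. -/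
def entrySum (M : Matrix (Fin 3) (Fin 3) ℤ) : ℤ := ∑ i, ∑ j, M i j

theorem flipMat_mul_self : flipMat * flipMat = 1 := by
  ext i j; fin_cases i <;> fin_cases j <;> simp [flipMat, Matrix.mul_apply, Fin.sum_univ_three]

theorem flipMat_mem : flipMat ∈ E3N := by
  refine ⟨?_, Or.inr ?_, Or.inr ?_⟩
  · intro i j; fin_cases i <;> fin_cases j <;> simp [flipMat]
  · ext i j; fin_cases i <;> fin_cases j <;>
      simp [flipMat, Emat, Matrix.mul_apply, Fin.sum_univ_three]
  · simp [flipMat, Matrix.det_fin_three]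

theorem IsFlip.mem {U : Matrix (Fin 3) (Fin 3) ℤ} (h : IsFlip U) : U ∈ E3N := by
  rcases h with rfl | rfl
  · exact one_mem_E3N
  · exact flipMat_mem

theorem familyMat_mem (n : ℕ) : familyMat n ∈ E3N := by
  refine ⟨?_, Or.inl ?_, Or.inr ?_⟩
  · intro i j; fin_cases i <;> fin_cases j <;> simp [familyMat] <;> positivity
  · ext i j; fin_cases i <;> fin_cases j <;>
      simp [familyMat, Emat, Matrix.mul_apply, Fin.sum_univ_three] <;> ring
  · simp [familyMat, Matrix.det_fin_three]; ring

theorem E3N_mul {X Y : Matrix (Fin 3) (Fin 3) ℤ} (hX : X ∈ E3N) (hY : Y ∈ E3N) :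
    X * Y ∈ E3N := by
  obtain ⟨hX0, hXE, hXd⟩ := hX
  obtain ⟨hY0, hYE, hYd⟩ := hY
  refine ⟨fun i j => ?_, ?_, ?_⟩
  · rw [Matrix.mul_apply]
    exact Finset.sum_nonneg fun k _ => mul_nonneg (hX0 i k) (hY0 k j)
  · have h : X * Y * Emat * (X * Y)ᵀ = X * (Y * Emat * Yᵀ) * Xᵀ := by
      simp only [Matrix.transpose_mul, Matrix.mul_assoc]
    rw [h]
    rcases hXE with hX | hX <;> rcases hYE with hY | hY <;> simp [hX, hY]
  · rw [Matrix.det_mul]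
    rcases hXd with hX | hX <;> rcases hYd with hY | hY <;> simp [hX, hY]

/-- The middle row of an element of `E(3,ℕ)` is determined, up to a sign, by the outer rows, and the
outer rows pair to `±1` under `E`; in the coordinates `x ↦ (x₀ + x₁, x₁ + x₂)` the form `E` is the
determinant. -/
theorem E3N_rows {M : Matrix (Fin 3) (Fin 3) ℤ} (hM : M ∈ E3N) :
    ∃ k : ℤ, (k = 1 ∨ k = -1) ∧ M 1 0 = M 0 0 + M 2 0 - k ∧ M 1 1 = M 0 1 + M 2 1 + k ∧
      M 1 2 = M 0 2 + M 2 2 - k ∧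
      ((M 0 0 + M 0 1) * (M 2 1 + M 2 2) - (M 0 1 + M 0 2) * (M 2 0 + M 2 1) = 1 ∨
       (M 0 0 + M 0 1) * (M 2 1 + M 2 2) - (M 0 1 + M 0 2) * (M 2 0 + M 2 1) = -1) := by
  obtain ⟨-, hE, hd⟩ := hM
  have hv : Emat *ᵥ ![1, -1, 1] = 0 := by
    ext i; fin_cases i <;> simp [Emat, Matrix.mulVec, dotProduct, Fin.sum_univ_three]
  have h1 : M *ᵥ (Emat *ᵥ (Mᵀ *ᵥ ![1, -1, 1])) = 0 := by
    rw [Matrix.mulVec_mulVec, Matrix.mulVec_mulVec]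
    rcases hE with h | h <;> simp [h, hv, Matrix.neg_mulVec]
  have h2 : Emat *ᵥ (Mᵀ *ᵥ ![1, -1, 1]) = 0 :=
    Matrix.eq_zero_of_mulVec_eq_zero (by rcases hd with h | h <;> simp [h]) h1
  have e0 := congrFun h2 0
  have e1 := congrFun h2 1
  simp [Emat, Matrix.mulVec, dotProduct, Fin.sum_univ_three] at e0 e1
  have hf : (M * Emat * Mᵀ) 0 2 = 1 ∨ (M * Emat * Mᵀ) 0 2 = -1 := by
    rcases hE with h | h <;> rw [h] <;> simp [Emat]
  simp only [Emat, Matrix.mul_apply, Fin.sum_univ_three, Matrix.transpose_apply] at hf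
  simp at hf
  refine ⟨M 0 0 - M 1 0 + M 2 0, ?_, by ring, by linarith, by linarith, ?_⟩
  · -- this number divides the determinant, as one sees by expanding along `r₀ - r₁ + r₂`
    have h11 : M 1 1 = M 0 1 + M 2 1 + (M 0 0 - M 1 0 + M 2 0) := by linarith
    have h12 : M 1 2 = M 0 2 + M 2 2 - (M 0 0 - M 1 0 + M 2 0) := by linarith
    have hdvd : (M 0 0 - M 1 0 + M 2 0) ∣ M.det := by
      refine ⟨(M 0 1 * M 2 2 - M 0 2 * M 2 1) + (M 0 0 * M 2 2 - M 0 2 * M 2 0)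
        + (M 0 0 * M 2 1 - M 0 1 * M 2 0), ?_⟩
      rw [Matrix.det_fin_three, h11, h12]; ring
    apply Int.isUnit_iff.mp
    apply isUnit_of_dvd_unit hdvd
    rcases hd with h | h <;> simp [h]
  · rcases hf with h | h
    · left; linarith
    · right; linarith

/-- A nonnegative combination of nonzero nonnegative vectors equal to `(0, 1, 0)` is a single one
of these vectors. -/
theorem E3N_row_combination {X Y : Matrix (Fin 3) (Fin 3) ℤ} (hX : X ∈ E3N) (hY : Y ∈ E3N)
    (h0 : (X * Y) 0 0 = 0) (h1 : (X * Y) 0 1 = 1) (h2 : (X * Y) 0 2 = 0) :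
    ∃ i, Y i 0 = 0 ∧ Y i 1 = 1 ∧ Y i 2 = 0 ∧ X 0 i = 1 ∧ ∀ j, j ≠ i → X 0 j = 0 := by
  have hXn := hX.1
  have hYn := hY.1
  rw [Matrix.mul_apply] at h0 h1 h2
  have z (j k) (h : ∑ i, X 0 i * Y i k = 0) : X 0 j * Y j k = 0 :=
    (Finset.sum_eq_zero_iff_of_nonneg
      (fun i _ => mul_nonneg (hXn 0 i) (hYn i k))).mp h j (Finset.mem_univ j)
  have hrow (j) : ¬ (Y j 0 = 0 ∧ Y j 1 = 0 ∧ Y j 2 = 0) := by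
    rintro ⟨a, b, c⟩
    have : Y.det = 0 := Matrix.det_eq_zero_of_row_eq_zero j (fun k => by fin_cases k <;> assumption)
    rcases hY.2.2 with h | h <;> omega
  obtain ⟨i, hi⟩ : ∃ i, X 0 i * Y i 1 ≠ 0 := by
    by_contra! h
    simp [h] at h1
  have hn (j) : 0 ≤ X 0 j * Y j 1 := mul_nonneg (hXn 0 j) (hYn j 1)
  have hsplit := Finset.add_sum_erase Finset.univ (fun j => X 0 j * Y j 1) (Finset.mem_univ i)
  have hrest : 0 ≤ ∑ j ∈ Finset.univ.erase i, X 0 j * Y j 1 :=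
    Finset.sum_nonneg fun j _ => hn j
  have hi1 : X 0 i * Y i 1 = 1 := by have := hn i; omega
  have hr0 : ∑ j ∈ Finset.univ.erase i, X 0 j * Y j 1 = 0 := by omega
  have hx : X 0 i = 1 := Int.eq_one_of_mul_eq_one_right (hXn 0 i) hi1
  refine ⟨i, ?_, ?_, ?_, hx, fun j hj => ?_⟩
  · simpa [hx] using z i 0 h0
  · simpa [hx] using hi1
  · simpa [hx] using z i 2 h2
  · have hj1 := (Finset.sum_eq_zero_iff_of_nonneg (fun j _ => hn j)).mp hr0 j (by simp [hj])
    have hj0 := z j 0 h0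
    have hj2 := z j 2 h2
    by_contra hne
    simp only [mul_eq_zero, hne, false_or] at hj0 hj1 hj2
    exact hrow j ⟨hj0, hj1, hj2⟩

/-- If the first row of the left factor `X` of `familyMat n` is `(1, 0, 0)`, then `X = 1`: since
`Y 0 1 = 1`, the zeros in the middle column of `familyMat n` clear the first column of `X`. -/
theorem familyMat_factor_left {n : ℕ} {X Y : Matrix (Fin 3) (Fin 3) ℤ} (hX : X ∈ E3N)
    (hY : Y ∈ E3N) (h : X * Y = familyMat n) (y1 : Y 0 1 = 1)
    (x0 : X 0 0 = 1) (x1 : X 0 1 = 0) (x2 : X 0 2 = 0) : X = 1 := by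
  obtain ⟨k, hk, r0, r1, r2, hf⟩ := E3N_rows hX
  have e1 := congrFun (congrFun h 1) 1
  have e2 := congrFun (congrFun h 2) 1
  simp [Matrix.mul_apply, Fin.sum_univ_three, familyMat, y1] at e1 e2
  have hXn := hX.1
  have hYn := hY.1
  have p (i j l) : 0 ≤ X i j * Y j l := mul_nonneg (hXn i j) (hYn j l)
  have c2 : X 2 0 = 0 := by have := p 2 1 1; have := p 2 2 1; have := hXn 2 0; omega
  have c1 : X 1 0 = 0 := by have := p 1 1 1; have := p 1 2 1; have := hXn 1 0; omega
  have n1 := hXn 2 1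
  have n2 := hXn 2 2
  have n3 := hXn 1 2
  simp only [x0, x1, x2, c1, c2] at r0 r1 r2 hf
  have : k = 1 ∧ X 2 1 = 0 ∧ X 2 2 = 1 := by omega
  obtain ⟨rfl, q1, q2⟩ := this
  ext i j
  fin_cases i <;> fin_cases j <;> simp <;> omega

/-- `familyMat n` has no nontrivial factorization in `E(3,ℕ)`. -/
theorem familyMat_irreducible {n : ℕ} {X Y : Matrix (Fin 3) (Fin 3) ℤ} (hX : X ∈ E3N)
    (hY : Y ∈ E3N) (h : X * Y = familyMat n) : IsFlip X ∨ IsFlip Y := by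
  obtain ⟨i, y0, y1, y2, hx, hx'⟩ := E3N_row_combination hX hY
    (by simp [h, familyMat]) (by simp [h, familyMat]) (by simp [h, familyMat])
  have hi : i = 0 ∨ i = 1 ∨ i = 2 := by fin_cases i <;> simp
  rcases hi with rfl | rfl | rfl
  · exact Or.inl (Or.inl (familyMat_factor_left hX hY h y1 hx (hx' 1 (by decide))
      (hx' 2 (by decide))))
  · -- a middle row `(0, 1, 0)` of `Y` forces `Y` to be a permutation matrix
    right
    obtain ⟨k, hk, r0, r1, r2, hf⟩ := E3N_rows hY
    have a0 := hY.1 0 0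
    have a1 := hY.1 0 1
    have a2 := hY.1 0 2
    have c0 := hY.1 2 0
    have c1 := hY.1 2 1
    have c2 := hY.1 2 2
    have h01 : Y 0 1 = 0 := by omega
    have h21 : Y 2 1 = 0 := by omega
    have hk1 : k = 1 := by omega
    have h20 : Y 2 0 = 1 - Y 0 0 := by omega
    have h22 : Y 2 2 = 1 - Y 0 2 := by omega
    have hdiff : Y 0 0 - Y 0 2 = 1 ∨ Y 0 0 - Y 0 2 = -1 := by
      rw [h01, h21, h20, h22] at hf
      rcases hf with hf | hf
      · left; linarith
      · right; linarith
    rcases hdiff with hdiff | hdiff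
    · left; ext i j; fin_cases i <;> fin_cases j <;> simp <;> omega
    · right; ext i j; fin_cases i <;> fin_cases j <;> simp [flipMat] <;> omega
  · -- inserting `flipMat * flipMat = 1` between the factors reduces to the case `i = 0`
    left; right
    have h' : (X * flipMat) * (flipMat * Y) = familyMat n := by
      rw [Matrix.mul_assoc, ← Matrix.mul_assoc flipMat, flipMat_mul_self, Matrix.one_mul, h]
    have hX1 : X * flipMat = 1 := by
      refine familyMat_factor_left (E3N_mul hX flipMat_mem) (E3N_mul flipMat_mem hY) h' ?_ ?_ ?_ ?_
      · simp [Matrix.mul_apply, Fin.sum_univ_three, flipMat, y1]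
      · simp [Matrix.mul_apply, Fin.sum_univ_three, flipMat, hx]
      · simp [Matrix.mul_apply, Fin.sum_univ_three, flipMat, hx' 1 (by decide)]
      · simp [Matrix.mul_apply, Fin.sum_univ_three, flipMat, hx' 0 (by decide)]
    calc X = X * flipMat * flipMat := by rw [Matrix.mul_assoc, flipMat_mul_self, Matrix.mul_one]
      _ = flipMat := by rw [hX1, Matrix.one_mul]

theorem entrySum_flip {U V : Matrix (Fin 3) (Fin 3) ℤ} (hU : IsFlip U) (hV : IsFlip V)
    (M : Matrix (Fin 3) (Fin 3) ℤ) : entrySum (U * M * V) = entrySum M := by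
  rcases hU with rfl | rfl <;> rcases hV with rfl | rfl <;>
    simp [entrySum, Matrix.mul_apply, Fin.sum_univ_three, flipMat, Matrix.vecMul, dotProduct] <;> ring

theorem entrySum_familyMat (n : ℕ) : entrySum (familyMat n) = 4 * n + 5 := by
  simp [entrySum, Fin.sum_univ_three, familyMat]; ring

/-- The monoid E(3,ℕ) is not finitely generated: there is no finite set S of
3×3 integer matrices contained in E(3,ℕ) such that the submonoid generated by
S equals E(3,ℕ). -/
theorem E3N_not_finitely_generated :
    ¬ ∃ S : Finset (Matrix (Fin 3) (Fin 3) ℤ),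
      (↑S : Set (Matrix (Fin 3) (Fin 3) ℤ)) ⊆ E3N ∧
      ∀ M : Matrix (Fin 3) (Fin 3) ℤ,
        M ∈ E3N ↔ M ∈ Submonoid.closure (↑S : Set (Matrix (Fin 3) (Fin 3) ℤ)) := by
  rintro ⟨S, hS, hgen⟩
  -- `n` bounds the entry sums of all elements of `S`
  obtain ⟨n, hn⟩ : ∃ n : ℕ, ∀ s ∈ S, entrySum s ≤ n :=
    ⟨S.sup fun s => (entrySum s).toNat, fun s hs => (Int.self_le_toNat _).trans
      (by exact_mod_cast Finset.le_sup (f := fun s => (entrySum s).toNat) hs)⟩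
  have key : ∀ M ∈ Submonoid.closure (↑S : Set (Matrix (Fin 3) (Fin 3) ℤ)),
      ∀ U V, IsFlip U → IsFlip V → U * M * V ≠ familyMat n := by
    intro M hM
    induction hM using Submonoid.closure_induction with
    | mem s hs =>
      intro U V hU hV h
      have h1 := entrySum_flip hU hV s
      have h2 := hn s hs
      rw [h, entrySum_familyMat] at h1
      omega
    | one =>
      intro U V hU hV h
      have h1 := entrySum_flip hU hV 1
      rw [h, entrySum_familyMat] at h1
      simp [entrySum, Fin.sum_univ_three] at h1
      omega
    | mul X Y hX hY ihX ihY =>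
      intro U V hU hV h
      have h' : (U * X) * (Y * V) = familyMat n := by
        simpa only [Matrix.mul_assoc] using h
      rcases familyMat_irreducible (E3N_mul hU.mem ((hgen X).mpr hX))
        (E3N_mul ((hgen Y).mpr hY) hV.mem) h' with hu | hv
      · exact ihY (U * X) V hu hV (by simpa only [Matrix.mul_assoc] using h)
      · exact ihX U (Y * V) hU hv h'
  exact key _ ((hgen _).mp (familyMat_mem n)) 1 1 (Or.inl rfl) (Or.inl rfl) (by simp)
end

section
/- Let α, β, γ > 0 be real numbers such that α+β and β+γ are linearly independent over ℚ, let T be the 3-interval exchange transformation with parameters (α,β,γ) in the left-closed convention, and let x₀ ∈ [0, α+β+γ). Let T̃ be the 3-interval exchange transformation with parameters (γ,β,α) in the right-closed convention. Then applying the morphism ξ (A↦C, B↦B, C↦A) letter by letter to the coding word u_T(x₀) yields exactly the coding word u_{T̃}(α+β+γ−x₀): for every n ∈ ℤ, ξ((u_T(x₀))_n) = (u_{T̃}(α+β+γ−x₀))_n. In particular, ξ maps every 3iet word to a 3iet word. -/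
/-!
The reflection `R x = α + β + γ - x` exchanges the two conventions: it carries the intervals
coded `A`, `B`, `C` by the left-closed transformation with parameters `(α, β, γ)` onto those
coded `C`, `B`, `A` by the right-closed one with parameters `(γ, β, α)`, and it conjugates the
first transformation (and its inverse) to the second. These identities hold for every real
argument of the piecewise formulas once `0 < β`, so they pass to all iterates (`reflect_zIter`) and give the
letterwise identity `xi_uLeft`. As `ξ` and `R` are involutions, the same identity read backwards
handles right-closed words (`xi_uRight`); the condition on the parameters is symmetric under
`α ↔ γ`.
-/

/-- The three-letter alphabet {A, B, C}. -/
inductive Letter : Type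
  | A | B | C
  deriving DecidableEq

/-- Left-closed 3-interval exchange transformation with parameters (α, β, γ),
defined piecewise on the domain [0, α+β+γ) (and extended by the same formulas
elsewhere). -/
noncomputable def Tleft (α β γ : ℝ) (x : ℝ) : ℝ :=
  if x < α then x + β + γ else if x < α + β then x - α + γ else x - α - β

/-- The inverse of `Tleft` on its domain. -/
noncomputable def TleftInv (α β γ : ℝ) (x : ℝ) : ℝ :=
  if x < γ then x + α + β else if x < β + γ then x + α - γ else x - β - γ

/-- Right-closed 3-interval exchange transformation with parameters (α, β, γ),
defined piecewise on the domain (0, α+β+γ]. -/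
noncomputable def Tright (α β γ : ℝ) (x : ℝ) : ℝ :=
  if x ≤ α then x + β + γ else if x ≤ α + β then x - α + γ else x - α - β

/-- The inverse of `Tright` on its domain. -/
noncomputable def TrightInv (α β γ : ℝ) (x : ℝ) : ℝ :=
  if x ≤ γ then x + α + β else if x ≤ β + γ then x + α - γ else x - β - γ

/-- ℤ-indexed iteration: nonnegative powers use `f`, negative powers use the
inverse map `g`. -/
noncomputable def zIter (f g : ℝ → ℝ) : ℤ → ℝ → ℝ
  | Int.ofNat n => f^[n]
  | Int.negSucc n => g^[n + 1]

/-- The letter coding of a point, left-closed convention: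
A on [0,α), B on [α,α+β), C on [α+β,α+β+γ). -/
noncomputable def codeLeft (α β : ℝ) (x : ℝ) : Letter :=
  if x < α then Letter.A else if x < α + β then Letter.B else Letter.C

/-- The letter coding of a point, right-closed convention:
A on (0,α], B on (α,α+β], C on (α+β,α+β+γ]. -/
noncomputable def codeRight (α β : ℝ) (x : ℝ) : Letter :=
  if x ≤ α then Letter.A else if x ≤ α + β then Letter.B else Letter.C

/-- The biinfinite word coding the orbit of x₀ under the left-closed
3-interval exchange transformation with parameters (α, β, γ). -/
noncomputable def uLeft (α β γ x₀ : ℝ) (n : ℤ) : Letter :=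
  codeLeft α β (zIter (Tleft α β γ) (TleftInv α β γ) n x₀)

/-- The biinfinite word coding the orbit of x₀ under the right-closed
3-interval exchange transformation with parameters (α, β, γ). -/
noncomputable def uRight (α β γ x₀ : ℝ) (n : ℤ) : Letter :=
  codeRight α β (zIter (Tright α β γ) (TrightInv α β γ) n x₀)

/-- A biinfinite word over {A,B,C} is a 3iet word if it codes the orbit of a
point under a 3-interval exchange transformation (in either convention) whose
parameters α, β, γ > 0 satisfy: α+β and β+γ are linearly independent over ℚ. -/
def Is3ietWord (u : ℤ → Letter) : Prop :=
  ∃ α β γ x₀ : ℝ, 0 < α ∧ 0 < β ∧ 0 < γ ∧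
    LinearIndependent ℚ ![α + β, β + γ] ∧
    ((x₀ ∈ Set.Ico (0 : ℝ) (α + β + γ) ∧ u = uLeft α β γ x₀) ∨
     (x₀ ∈ Set.Ioc (0 : ℝ) (α + β + γ) ∧ u = uRight α β γ x₀))

/-- The morphism ξ : A ↦ C, B ↦ B, C ↦ A, as a map on letters. -/
def xiLetter : Letter → Letter
  | Letter.A => Letter.C
  | Letter.B => Letter.B
  | Letter.C => Letter.A

lemma reflect_Tleft {α β γ : ℝ} (hβ : 0 < β) :
    Function.Semiconj (fun x => α + β + γ - x) (Tleft α β γ) (Tright γ β α) := by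
  intro x
  simp only [Tleft, Tright]
  split_ifs <;> linarith

lemma reflect_TleftInv {α β γ : ℝ} (hβ : 0 < β) :
    Function.Semiconj (fun x => α + β + γ - x) (TleftInv α β γ) (TrightInv γ β α) := by
  intro x
  simp only [TleftInv, TrightInv]
  split_ifs <;> linarith

lemma xi_codeLeft {α β γ : ℝ} (hβ : 0 < β) (x : ℝ) :
    xiLetter (codeLeft α β x) = codeRight γ β (α + β + γ - x) := by
  simp only [codeLeft, codeRight]
  split_ifs <;> first | rfl | (exfalso; linarith)

lemma reflect_zIter {α β γ : ℝ} (hβ : 0 < β) (n : ℤ) (x : ℝ) :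
    α + β + γ - zIter (Tleft α β γ) (TleftInv α β γ) n x =
      zIter (Tright γ β α) (TrightInv γ β α) n (α + β + γ - x) := by
  cases n with
  | ofNat n => exact (reflect_Tleft hβ).iterate_right n x
  | negSucc n => exact (reflect_TleftInv hβ).iterate_right (n + 1) x

lemma xi_uLeft {α β γ : ℝ} (hβ : 0 < β) (x : ℝ) (n : ℤ) :
    xiLetter (uLeft α β γ x n) = uRight γ β α (α + β + γ - x) n := by
  rw [uLeft, uRight, xi_codeLeft (γ := γ) hβ, reflect_zIter hβ]

lemma xi_involutive : Function.Involutive xiLetter := by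
  rintro (_ | _ | _) <;> rfl

lemma xi_uRight {α β γ : ℝ} (hβ : 0 < β) (x : ℝ) (n : ℤ) :
    xiLetter (uRight α β γ x n) = uLeft γ β α (α + β + γ - x) n := by
  have h := xi_uLeft (α := γ) (γ := α) hβ (α + β + γ - x) n
  rw [show γ + β + α - (α + β + γ - x) = x by ring] at h
  rw [← h, xi_involutive]

lemma linearIndependent_swap {α β γ : ℝ} (h : LinearIndependent ℚ ![α + β, β + γ]) :
    LinearIndependent ℚ ![γ + β, β + α] := by
  rw [LinearIndependent.pair_symm_iff, add_comm β α, add_comm γ β]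
  exact h

/-- Applying ξ letter by letter to the coding word of x₀ under the left-closed
3iet with parameters (α,β,γ) yields the coding word of α+β+γ−x₀ under the
right-closed 3iet with parameters (γ,β,α).  In particular, ξ maps every 3iet
word to a 3iet word. -/
theorem xi_maps_coding_words (α β γ x₀ : ℝ) (hα : 0 < α) (hβ : 0 < β) (hγ : 0 < γ)
    (hirr : LinearIndependent ℚ ![α + β, β + γ])
    (hx₀ : x₀ ∈ Set.Ico (0 : ℝ) (α + β + γ)) :
    (∀ n : ℤ, xiLetter (uLeft α β γ x₀ n) = uRight γ β α (α + β + γ - x₀) n) ∧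
    (∀ u : ℤ → Letter, Is3ietWord u → Is3ietWord (fun n => xiLetter (u n))) := by
  refine ⟨xi_uLeft hβ x₀, ?_⟩
  rintro u ⟨a, b, c, x, ha, hb, hc, hli, ⟨hx, rfl⟩ | ⟨hx, rfl⟩⟩
  · refine ⟨c, b, a, a + b + c - x, hc, hb, ha, linearIndependent_swap hli, Or.inr ⟨?_, ?_⟩⟩
    · exact ⟨by linarith [hx.2], by linarith [hx.1]⟩
    · exact funext (xi_uLeft hb x)
  · refine ⟨c, b, a, a + b + c - x, hc, hb, ha, linearIndependent_swap hli, Or.inl ⟨?_, ?_⟩⟩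
    · exact ⟨by linarith [hx.2], by linarith [hx.1]⟩
    · exact funext (xi_uRight hb x)
end

section
/- Let k ≥ 1 be an integer and α, β, γ > 0 real numbers. Let T be the 3-interval exchange transformation with parameters (α,β,γ) in the left-closed convention, with intervals I_A = [0,α), I_B = [α,α+β), I_C = [α+β,α+β+γ). Put |I_A'| = γ, |I_B'| = kα+(k+1)β, |I_C'| = (k−1)α+kβ+2γ, and define I_A' = [(1−k)α−kβ−γ, (1−k)α−kβ), I_B' = [(1−k)α−kβ, α+β), I_C' = [α+β, kα+(k+1)β+2γ), D' = I_A' ∪ I_B' ∪ I_C', and T' : D' → D' by T'(x) = x + |I_B'| + |I_C'| for x ∈ I_A', T'(x) = x − |I_A'| + |I_C'| for x ∈ I_B', T'(x) = x − |I_A'| − |I_B'| for x ∈ I_C'. Then: (i) I_A ∪ I_B ⊆ I_B' and I_C ⊆ I_C'; (ii) for every x ∈ I_C, T'(x) ∈ I_A', (T')²(x) ∈ I_C', and (T')³(x) = T(x); (iii) for every x ∈ I_B, (T')^{2l}(x) ∈ I_B' for all 0 ≤ l ≤ k, (T')^{2l+1}(x) ∈ I_C' for all 0 ≤ l ≤ k−1,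 and (T')^{2k+1}(x) = T(x); (iv) for every x ∈ I_A, (T')^{2l}(x) ∈ I_B' for all 0 ≤ l ≤ k−1, (T')^{2l+1}(x) ∈ I_C' for all 0 ≤ l ≤ k−2, and (T')^{2k−1}(x) = T(x). -/
/-!
`T'` is a translation by `(k-1)α + kβ + γ` on `I_B'` and by `-(kα + (k+1)β + γ)` on `I_C'`, so a
passage through `I_B'` and then `I_C'` is a translation by `-(α + β)`. Hence a point `x < α + β`
descends inside `I_B'` in steps of `α + β`, every second iterate, for as long as it stays above the
left endpoint of `I_B'` (`iterate_descent`). A point of `I_B` can make `k` such steps and a point of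
`I_A` can make `k - 1`; one further translation from `I_B'` then produces `T x`
(`iterate_descent_last`). A point of `I_C` passes through `I_C'`, `I_A'`, `I_C'`, and the three
translations add up to `-(α + β)`.
-/

open Classical

/-- The length |I_B'| = kα + (k+1)β. -/
def lenB' (k : ℕ) (α β : ℝ) : ℝ := (k : ℝ) * α + ((k : ℝ) + 1) * β

/-- The length |I_C'| = (k−1)α + kβ + 2γ. -/
def lenC' (k : ℕ) (α β γ : ℝ) : ℝ := ((k : ℝ) - 1) * α + (k : ℝ) * β + 2 * γ

/-- The interval I_A' = [(1−k)α−kβ−γ, (1−k)α−kβ). -/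
def IA' (k : ℕ) (α β γ : ℝ) : Set ℝ :=
  Set.Ico ((1 - (k : ℝ)) * α - (k : ℝ) * β - γ) ((1 - (k : ℝ)) * α - (k : ℝ) * β)

/-- The interval I_B' = [(1−k)α−kβ, α+β). -/
def IB' (k : ℕ) (α β : ℝ) : Set ℝ :=
  Set.Ico ((1 - (k : ℝ)) * α - (k : ℝ) * β) (α + β)

/-- The interval I_C' = [α+β, kα+(k+1)β+2γ). -/
def IC' (k : ℕ) (α β γ : ℝ) : Set ℝ :=
  Set.Ico (α + β) ((k : ℝ) * α + ((k : ℝ) + 1) * β + 2 * γ)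

/-- The transformation T' : it adds |I_B'| + |I_C'| on I_A', adds
|I_C'| − |I_A'| on I_B', and subtracts |I_A'| + |I_B'| elsewhere (in
particular on I_C'); here |I_A'| = γ. -/
noncomputable def T' (k : ℕ) (α β γ : ℝ) (x : ℝ) : ℝ :=
  if x ∈ IA' k α β γ then x + lenB' k α β + lenC' k α β γ
  else if x ∈ IB' k α β then x - γ + lenC' k α β γ
  else x - γ - lenB' k α β

lemma T'_of_mem_IA' {k : ℕ} {α β γ x : ℝ} (hx : x ∈ IA' k α β γ) :
    T' k α β γ x = x + (2 * k - 1) * α + (2 * k + 1) * β + 2 * γ := by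
  rw [T', if_pos hx, lenB', lenC']
  ring

lemma T'_of_mem_IB' {k : ℕ} {α β γ x : ℝ} (hx : x ∈ IB' k α β) :
    T' k α β γ x = x + ((k : ℝ) - 1) * α + k * β + γ := by
  have hA : x ∉ IA' k α β γ := fun h => absurd h.2 (not_lt.mpr hx.1)
  rw [T', if_neg hA, if_pos hx, lenC']
  ring

lemma T'_of_mem_IC' {k : ℕ} {α β γ x : ℝ} (hα : 0 < α) (hβ : 0 < β)
    (hx : x ∈ IC' k α β γ) :
    T' k α β γ x = x - k * α - (k + 1) * β - γ := by
  have hB : x ∉ IB' k α β := fun h => absurd h.2 (not_lt.mpr hx.1)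
  have hA : x ∉ IA' k α β γ := by
    intro h
    have h1 := hx.1
    have h2 := h.2
    have hkα : 0 ≤ (k : ℝ) * α := by positivity
    have hkβ : 0 ≤ (k : ℝ) * β := by positivity
    linarith
  rw [T', if_neg hA, if_neg hB, lenB']
  ring

/-- A point `y` of `I_B'` such that `y - (α + β)` is still to the right of the left endpoint of
`I_B'` is sent into `I_C'`; the next image is then `y - (α + β)`. -/
lemma descent_step {k : ℕ} {α β γ y : ℝ} (hα : 0 < α) (hβ : 0 < β) (hγ : 0 < γ)
    (hy : y ∈ IB' k α β) (hlow : (1 - (k : ℝ)) * α - k * β ≤ y - (α + β)) :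
    T' k α β γ y ∈ IC' k α β γ ∧ T' k α β γ (T' k α β γ y) = y - (α + β) := by
  have hC : T' k α β γ y ∈ IC' k α β γ := by
    have h2 := hy.2
    rw [T'_of_mem_IB' hy]
    constructor <;> linarith
  refine ⟨hC, ?_⟩
  rw [T'_of_mem_IC' hα hβ hC, T'_of_mem_IB' hy]
  ring

/-- If `x < α + β` and `x - m (α + β)` is not to the left of `I_B'`, then the even iterates of
`x` up to order `2 m` descend through `I_B'` in steps of `α + β`. -/
lemma iterate_descent {k : ℕ} {α β γ x : ℝ} (hα : 0 < α) (hβ : 0 < β) (hγ : 0 < γ)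
    (hx : x < α + β) {m : ℕ} (hm : (1 - (k : ℝ)) * α - k * β ≤ x - m * (α + β)) :
    ∀ l : ℕ, l ≤ m →
      (T' k α β γ)^[2 * l] x = x - l * (α + β) ∧ (T' k α β γ)^[2 * l] x ∈ IB' k α β := by
  have hmem : ∀ l : ℕ, l ≤ m → x - l * (α + β) ∈ IB' k α β := by
    intro l hl
    have hlm : (l : ℝ) * (α + β) ≤ m * (α + β) := by gcongr
    have hl0 : 0 ≤ (l : ℝ) * (α + β) := by positivity
    constructor <;> linarith
  intro l hl
  suffices h : (T' k α β γ)^[2 * l] x = x - l * (α + β) from ⟨h, h ▸ hmem l hl⟩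
  induction l with
  | zero => simp
  | succ l ih =>
    have hnext : x - ((l + 1 : ℕ) : ℝ) * (α + β) = x - l * (α + β) - (α + β) := by
      push_cast
      ring
    rw [show 2 * (l + 1) = 2 * l + 1 + 1 by ring, Function.iterate_succ_apply',
      Function.iterate_succ_apply', ih (by omega), hnext]
    exact (descent_step hα hβ hγ (hmem l (by omega)) (hnext ▸ (hmem (l + 1) hl).1)).2

lemma iterate_descent_odd {k : ℕ} {α β γ x : ℝ} (hα : 0 < α) (hβ : 0 < β) (hγ : 0 < γ)
    (hx : x < α + β) {m : ℕ} (hm : (1 - (k : ℝ)) * α - k * β ≤ x - m * (α + β))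
    (l : ℕ) (hl : l < m) : (T' k α β γ)^[2 * l + 1] x ∈ IC' k α β γ := by
  obtain ⟨heq, hB⟩ := iterate_descent hα hβ hγ hx hm l hl.le
  obtain ⟨heq', hB'⟩ := iterate_descent hα hβ hγ hx hm (l + 1) hl
  rw [Function.iterate_succ_apply']
  refine (descent_step hα hβ hγ hB ?_).1
  have h := hB'.1
  rw [heq'] at h
  rw [heq]
  push_cast at h
  linarith

/-- After `m` descents, one more application of `T'` translates by `(k-1)α + kβ + γ`. -/
lemma iterate_descent_last {k : ℕ} {α β γ x : ℝ} (hα : 0 < α) (hβ : 0 < β) (hγ : 0 < γ)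
    (hx : x < α + β) {m : ℕ} (hm : (1 - (k : ℝ)) * α - k * β ≤ x - m * (α + β)) :
    (T' k α β γ)^[2 * m + 1] x = x - m * (α + β) + ((k : ℝ) - 1) * α + k * β + γ := by
  obtain ⟨heq, hB⟩ := iterate_descent hα hβ hγ hx hm m le_rfl
  rw [Function.iterate_succ_apply', T'_of_mem_IB' hB, heq]

/-- The key properties of the induced transformation T' from
Lemma 4 (`phik_is_3iet`) of the paper. -/
theorem Tprime_properties (k : ℕ) (hk : 1 ≤ k) (α β γ : ℝ)
    (hα : 0 < α) (hβ : 0 < β) (hγ : 0 < γ) :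
    -- (i) I_A ∪ I_B ⊆ I_B' and I_C ⊆ I_C'
    (Set.Ico (0 : ℝ) (α + β) ⊆ IB' k α β ∧
     Set.Ico (α + β) (α + β + γ) ⊆ IC' k α β γ) ∧
    -- (ii) behaviour on I_C
    (∀ x ∈ Set.Ico (α + β) (α + β + γ),
      T' k α β γ x ∈ IA' k α β γ ∧
      (T' k α β γ)^[2] x ∈ IC' k α β γ ∧
      (T' k α β γ)^[3] x = Tleft α β γ x) ∧
    -- (iii) behaviour on I_B
    (∀ x ∈ Set.Ico α (α + β),
      (∀ l : ℕ, l ≤ k → (T' k α β γ)^[2 * l] x ∈ IB' k α β) ∧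
      (∀ l : ℕ, l < k → (T' k α β γ)^[2 * l + 1] x ∈ IC' k α β γ) ∧
      (T' k α β γ)^[2 * k + 1] x = Tleft α β γ x) ∧
    -- (iv) behaviour on I_A
    (∀ x ∈ Set.Ico (0 : ℝ) α,
      (∀ l : ℕ, l < k → (T' k α β γ)^[2 * l] x ∈ IB' k α β) ∧
      (∀ l : ℕ, l + 1 < k → (T' k α β γ)^[2 * l + 1] x ∈ IC' k α β γ) ∧
      (T' k α β γ)^[2 * k - 1] x = Tleft α β γ x) := by
  have hk1 : (1 : ℝ) ≤ k := by exact_mod_cast hk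
  have hkα : 0 ≤ ((k : ℝ) - 1) * α := mul_nonneg (by linarith) hα.le
  have hkβ : 0 ≤ ((k : ℝ) - 1) * β := mul_nonneg (by linarith) hβ.le
  have hCC : Set.Ico (α + β) (α + β + γ) ⊆ IC' k α β γ := by
    rintro x ⟨h1, h2⟩
    constructor <;> linarith
  refine ⟨⟨?_, hCC⟩, ?_, ?_, ?_⟩
  · rintro x ⟨h1, h2⟩
    constructor <;> linarith
  · intro x hx
    have e1 := T'_of_mem_IC' hα hβ (hCC hx)
    obtain ⟨h1, h2⟩ := hx
    have hA : T' k α β γ x ∈ IA' k α β γ := by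
      rw [e1]
      constructor <;> linarith
    have e2 := T'_of_mem_IA' hA
    have hC : T' k α β γ (T' k α β γ x) ∈ IC' k α β γ := by
      rw [e2, e1]
      constructor <;> linarith
    refine ⟨hA, hC, ?_⟩
    change T' k α β γ (T' k α β γ (T' k α β γ x)) = _
    rw [T'_of_mem_IC' hα hβ hC, e2, e1, Tleft, if_neg (by linarith), if_neg (by linarith)]
    ring
  · rintro x ⟨h1, h2⟩
    have hm : (1 - (k : ℝ)) * α - k * β ≤ x - k * (α + β) := by linarith
    refine ⟨fun l hl => (iterate_descent hα hβ hγ h2 hm l hl).2,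
      iterate_descent_odd hα hβ hγ h2 hm, ?_⟩
    rw [iterate_descent_last hα hβ hγ h2 hm, Tleft, if_neg (by linarith), if_pos h2]
    ring
  · rintro x ⟨h1, h2⟩
    obtain ⟨m, rfl⟩ : ∃ m, k = m + 1 := ⟨k - 1, by omega⟩
    have hx : x < α + β := by linarith
    have hm : (1 - ((m + 1 : ℕ) : ℝ)) * α - ((m + 1 : ℕ) : ℝ) * β ≤ x - m * (α + β) := by
      push_cast
      linarith
    refine ⟨fun l hl => (iterate_descent hα hβ hγ hx hm l (by omega)).2,
      fun l hl => iterate_descent_odd hα hβ hγ hx hm l (by omega), ?_⟩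
    rw [show 2 * (m + 1) - 1 = 2 * m + 1 by omega, iterate_descent_last hα hβ hγ hx hm, Tleft,
      if_pos h2]
    push_cast
    ring
end

section
/- For every integer k ≥ 1, the morphism φ_k given by φ_k(A) = B(CB)^{k−1}, φ_k(B) = B(CB)^k, φ_k(C) = CAC is 3iet preserving: for every 3iet word u, the biinfinite word φ_k(u) is again a 3iet word. Specifically, if u = u_T(x₀) is the 3iet word coding the orbit of x₀ under the left-closed 3-interval exchange transformation T with parameters (α,β,γ), then φ_k(u) is the 3iet word coding the orbit of x₀ + (k−1)α + kβ + γ under the left-closed 3-interval exchange transformation with parameters (γ, kα+(k+1)β, (k−1)α+kβ+2γ). -/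
/-- A morphism over the alphabet {A,B,C}, determined by the images of the
three letters (as an endomorphism of the free monoid {A,B,C}*). -/
abbrev Morph := Letter → List Letter

/-- `IsImageWord φ u v` says that v is the biinfinite word
···φ(u₋₂)φ(u₋₁)φ(u₀)φ(u₁)···, in which the block φ(u₀) starts at position 0:
`c m` is the position at which the block φ(u_m) starts. -/
def IsImageWord (φ : Morph) (u v : ℤ → Letter) : Prop :=
  ∃ c : ℤ → ℤ, c 0 = 0 ∧ (∀ m : ℤ, c (m + 1) = c m + (φ (u m)).length) ∧
    ∀ (m : ℤ) (i : ℕ) (h : i < (φ (u m)).length),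
      v (c m + (i : ℤ)) = (φ (u m)).get ⟨i, h⟩

/-- A morphism is 3iet preserving if its letter images are nonempty (so that
it acts on biinfinite words) and it maps every 3iet word to a 3iet word. -/
def Preserves3iet (φ : Morph) : Prop :=
  (∀ a, φ a ≠ []) ∧
  ∀ u v : ℤ → Letter, Is3ietWord u → IsImageWord φ u v → Is3ietWord v

/-- The morphism φ_k : A ↦ B(CB)^{k−1}, B ↦ B(CB)^k, C ↦ CAC. -/
def phiK (k : ℕ) : Morph
  | Letter.A => Letter.B :: (List.replicate (k - 1) [Letter.C, Letter.B]).flatten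
  | Letter.B => Letter.B :: (List.replicate k [Letter.C, Letter.B]).flatten
  | Letter.C => [Letter.C, Letter.A, Letter.C]

/-! ### Half-open intervals and exchange transformations in either convention -/

/-- The common properties of `Set.Ico` and `Set.Ioc`: compatibility with translations and
enlargement, and splitting at an intermediate point. -/
structure HalfOpen (J : ℝ → ℝ → Set ℝ) : Prop where
  shift : ∀ {a b c d x : ℝ} (t : ℝ), x ∈ J a b → c ≤ a + t → b + t ≤ d → x + t ∈ J c d
  split : ∀ {a c x : ℝ} (b : ℝ), x ∈ J a c → x ∈ J a b ∨ x ∈ J b c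

/-- `S`, with inverse `Si` and coding function `code`, is the 3-interval exchange transformation
with parameters (α,β,γ) on the domain `J 0 (α+β+γ)`. -/
structure IsIET (J : ℝ → ℝ → Set ℝ) (α β γ : ℝ) (S Si : ℝ → ℝ) (code : ℝ → Letter) : Prop where
  onA : ∀ x ∈ J 0 α, code x = Letter.A ∧ S x = x + (β + γ)
  onB : ∀ x ∈ J α (α + β), code x = Letter.B ∧ S x = x + (γ - α)
  onC : ∀ x ∈ J (α + β) (α + β + γ), code x = Letter.C ∧ S x = x + (-(α + β))
  left_inv : ∀ x ∈ J 0 (α + β + γ), Si (S x) = x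
  right_inv : ∀ x ∈ J 0 (α + β + γ), S (Si x) = x
  maps_inv : ∀ x ∈ J 0 (α + β + γ), Si x ∈ J 0 (α + β + γ)
  maps : ∀ x ∈ J 0 (α + β + γ), S x ∈ J 0 (α + β + γ)

theorem halfOpen_Ico : HalfOpen Set.Ico where
  shift t hx hc hd := ⟨by linarith [hx.1], by linarith [hx.2]⟩
  split b hx := by
    rcases lt_or_ge _ b with h | h
    · exact Or.inl ⟨hx.1, h⟩
    · exact Or.inr ⟨h, hx.2⟩

theorem halfOpen_Ioc : HalfOpen Set.Ioc where
  shift t hx hc hd := ⟨by linarith [hx.1], by linarith [hx.2]⟩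
  split b hx := by
    rcases le_or_gt _ b with h | h
    · exact Or.inl ⟨hx.1, h⟩
    · exact Or.inr ⟨h, hx.2⟩

theorem isIET_left {α β γ : ℝ} (hα : 0 < α) (hβ : 0 < β) (hγ : 0 < γ) :
    IsIET Set.Ico α β γ (Tleft α β γ) (TleftInv α β γ) (codeLeft α β) := by
  constructor <;> rintro x ⟨h1, h2⟩ <;>
    simp only [codeLeft, Tleft, TleftInv, Set.mem_Ico] <;> split_ifs <;>
    first
      | (refine ⟨?_, ?_⟩ <;> first | rfl | linarith)
      | linarith

theorem isIET_right {α β γ : ℝ} (hα : 0 < α) (hβ : 0 < β) (hγ : 0 < γ) :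
    IsIET Set.Ioc α β γ (Tright α β γ) (TrightInv α β γ) (codeRight α β) := by
  constructor <;> rintro x ⟨h1, h2⟩ <;>
    simp only [codeRight, Tright, TrightInv, Set.mem_Ioc] <;> split_ifs <;>
    first
      | (refine ⟨?_, ?_⟩ <;> first | rfl | linarith)
      | linarith

/-! ### Orbits indexed by the integers -/

section Orbit

variable {J : ℝ → ℝ → Set ℝ} {α β γ : ℝ} {S Si : ℝ → ℝ} {code : ℝ → Letter}

theorem zIter_mem (hS : IsIET J α β γ S Si code) {x : ℝ} (hx : x ∈ J 0 (α + β + γ)) (n : ℤ) :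
    zIter S Si n x ∈ J 0 (α + β + γ) := by
  have hm : Set.MapsTo S (J 0 (α + β + γ)) (J 0 (α + β + γ)) := hS.maps
  have hi : Set.MapsTo Si (J 0 (α + β + γ)) (J 0 (α + β + γ)) := hS.maps_inv
  cases n with
  | ofNat n => exact hm.iterate n hx
  | negSucc n => exact hi.iterate (n + 1) hx

theorem zIter_succ (hS : IsIET J α β γ S Si code) {x : ℝ} (hx : x ∈ J 0 (α + β + γ)) (n : ℤ) :
    zIter S Si (n + 1) x = S (zIter S Si n x) := by
  have hi : Set.MapsTo Si (J 0 (α + β + γ)) (J 0 (α + β + γ)) := hS.maps_inv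
  cases n with
  | ofNat n => exact Function.iterate_succ_apply' S n x
  | negSucc n =>
    cases n with
    | zero => exact (hS.right_inv x hx).symm
    | succ n =>
      have h : S (Si^[n + 1 + 1] x) = Si^[n + 1] x := by
        rw [Function.iterate_succ_apply']
        exact hS.right_inv _ (hi.iterate (n + 1) hx)
      exact h.symm

theorem zIter_add_nat (hS : IsIET J α β γ S Si code) {x : ℝ} (hx : x ∈ J 0 (α + β + γ))
    (n : ℤ) (i : ℕ) : zIter S Si (n + i) x = S^[i] (zIter S Si n x) := by
  induction i with
  | zero => simp
  | succ i ih =>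
    rw [Function.iterate_succ_apply', ← ih, ← zIter_succ hS hx]
    push_cast
    rw [add_assoc]

theorem iterate_inj (hS : IsIET J α β γ S Si code) (i : ℕ) {x y : ℝ}
    (hx : x ∈ J 0 (α + β + γ)) (hy : y ∈ J 0 (α + β + γ)) (h : S^[i] x = S^[i] y) : x = y := by
  induction i generalizing x y with
  | zero => exact h
  | succ i ih =>
    have h' := ih (hS.maps x hx) (hS.maps y hy) h
    rw [← hS.left_inv x hx, h', hS.left_inv y hy]

end Orbit

/-! ### Itineraries -/

/-- `Reads S code w y z`: starting from `y`, the map `S` visits points coded by the successive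
letters of `w`, and arrives at `z` after the last of them. -/
def Reads (S : ℝ → ℝ) (code : ℝ → Letter) : List Letter → ℝ → ℝ → Prop
  | [], y, z => y = z
  | l :: w, y, z => code y = l ∧ Reads S code w (S y) z

theorem Reads.get {S : ℝ → ℝ} {code : ℝ → Letter} {w : List Letter} {y z : ℝ}
    (h : Reads S code w y z) (i : ℕ) (hi : i < w.length) : code (S^[i] y) = w.get ⟨i, hi⟩ := by
  induction w generalizing y i with
  | nil => simp at hi
  | cons l w ih =>
    cases i with
    | zero => exact h.1
    | succ i => exact ih h.2 i (by simpa using hi)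

theorem Reads.iterate {S : ℝ → ℝ} {code : ℝ → Letter} {w : List Letter} {y z : ℝ}
    (h : Reads S code w y z) : S^[w.length] y = z := by
  induction w generalizing y with
  | nil => exact h
  | cons l w ih => exact ih h.2

section Block

variable {J : ℝ → ℝ → Set ℝ} {a b c : ℝ} {S Si : ℝ → ℝ} {code : ℝ → Letter}

/-- The descent along `(CB)ⁿ`, from the image `y + (c−a)` of a `B`-point `y`: a step through `C`
leads to `y − δ`, which is again a `B`-point because `y` is at least `nδ` above the left end of the
`B`-interval. -/
theorem reads_CB (hJ : HalfOpen J) (hS : IsIET J a b c S Si code) (ha : 0 < a)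
    {δ : ℝ} (hδ : δ = a + b - (c - a)) (hδ0 : 0 ≤ δ) (n : ℕ) {y d : ℝ}
    (hy : y ∈ J (a + n * δ) d) (hd : d ≤ a + b) :
    Reads S code (List.replicate n [Letter.C, Letter.B]).flatten (y + (c - a))
      (y + (c - a) - n * δ) := by
  induction n generalizing y d with
  | zero => simp [Reads]
  | succ n ih =>
    have hn : 0 ≤ (n : ℝ) * δ := by positivity
    push_cast at hy
    obtain ⟨c1, s1⟩ := hS.onC (y + (c - a)) (hJ.shift _ hy (by linarith) (by linarith))
    have e1 : y + (c - a) + -(a + b) = y + -δ := by linarith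
    rw [e1] at s1
    have hy' : y + -δ ∈ J (a + n * δ) (d - δ) := hJ.shift _ hy (by linarith) (by linarith)
    obtain ⟨c2, s2⟩ := hS.onB (y + -δ) (hJ.shift _ hy (by linarith) (by linarith))
    have h := ih hy' (by linarith)
    rw [List.replicate_succ, List.flatten_cons]
    refine ⟨c1, ?_⟩
    rw [s1]
    refine ⟨c2, ?_⟩
    rw [s2]
    have e2 : y + (c - a) - ((n + 1 : ℕ) : ℝ) * δ = y + -δ + (c - a) - n * δ := by
      push_cast
      ring
    rw [e2]
    exact h

theorem reads_BCB (hJ : HalfOpen J) (hS : IsIET J a b c S Si code) (ha : 0 < a)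
    {δ : ℝ} (hδ : δ = a + b - (c - a)) (hδ0 : 0 ≤ δ) (n : ℕ) {y d : ℝ}
    (hy : y ∈ J (a + n * δ) d) (hd : d ≤ a + b) :
    Reads S code (Letter.B :: (List.replicate n [Letter.C, Letter.B]).flatten) y
      (y + (c - a) - n * δ) := by
  have hn : 0 ≤ (n : ℝ) * δ := by positivity
  obtain ⟨c1, s1⟩ := hS.onB y (by
    simpa using hJ.shift 0 hy (by linarith) (by linarith : d + 0 ≤ a + b))
  refine ⟨c1, ?_⟩
  rw [s1]
  exact reads_CB hJ hS ha hδ hδ0 n hy hd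

end Block

/-! ### The induced transformation -/

section Induced

variable {J : ℝ → ℝ → Set ℝ} {α β γ : ℝ} {T Ti S Si : ℝ → ℝ} {code code' : ℝ → Letter} {k : ℕ}

/-- The block of the orbit of `x + s` under the new transformation is `φ_k` of the letter of `x`,
and it ends at the point `T x + s`. -/
theorem reads_phiK (hk : 1 ≤ k) (hα : 0 < α) (hβ : 0 < β) (hγ : 0 < γ) (hJ : HalfOpen J)
    (hT : IsIET J α β γ T Ti code)
    (hS : IsIET J γ ((k : ℝ) * α + ((k : ℝ) + 1) * β)
      (((k : ℝ) - 1) * α + (k : ℝ) * β + 2 * γ) S Si code')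
    {x : ℝ} (hx : x ∈ J 0 (α + β + γ)) :
    Reads S code' (phiK k (code x)) (x + (((k : ℝ) - 1) * α + (k : ℝ) * β + γ))
      (T x + (((k : ℝ) - 1) * α + (k : ℝ) * β + γ)) := by
  obtain ⟨m, rfl⟩ : ∃ m, k = m + 1 := ⟨k - 1, by omega⟩
  have hmα : 0 ≤ (m : ℝ) * α := by positivity
  have hmβ : 0 ≤ (m : ℝ) * β := by positivity
  push_cast at hS ⊢
  rcases hJ.split (α + β) hx with hx | hx
  · rcases hJ.split α hx with hx | hx
    · obtain ⟨cx, Tx⟩ := hT.onA x hx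
      rw [cx, Tx]
      have h := reads_BCB hJ hS hγ (δ := α + β) (by ring) (by linarith) m
        (hJ.shift (((m : ℝ) + 1 - 1) * α + ((m : ℝ) + 1) * β + γ) hx
          (by linarith) le_rfl) (by linarith)
      convert h using 1
      · rfl
      · ring
    · obtain ⟨cx, Tx⟩ := hT.onB x hx
      rw [cx, Tx]
      have h := reads_BCB hJ hS hγ (δ := α + β) (by ring) (by linarith) (m + 1)
        (hJ.shift (((m : ℝ) + 1 - 1) * α + ((m : ℝ) + 1) * β + γ) hx
          (by push_cast; linarith) le_rfl) (by linarith)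
      convert h using 1
      · rfl
      · push_cast
        ring
  · obtain ⟨cx, Tx⟩ := hT.onC x hx
    rw [cx, Tx]
    obtain ⟨c1, s1⟩ := hS.onC (x + (((m : ℝ) + 1 - 1) * α + ((m : ℝ) + 1) * β + γ))
      (hJ.shift _ hx (by linarith) (by linarith))
    -- The orbit visits `x - (α + β)`, in the `A`-interval, then a point of the `C`-interval.
    have e1 : S (x + (((m : ℝ) + 1 - 1) * α + ((m : ℝ) + 1) * β + γ)) = x + -(α + β) := by
      rw [s1]
      ring
    obtain ⟨c2, s2⟩ := hS.onA (x + -(α + β)) (hJ.shift _ hx (by linarith) (by linarith))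
    rw [add_assoc x] at s2
    obtain ⟨c3, s3⟩ := hS.onC _ (hJ.shift (-(α + β) + (((m : ℝ) + 1) * α + ((m : ℝ) + 1 + 1) * β +
        (((m : ℝ) + 1 - 1) * α + ((m : ℝ) + 1) * β + 2 * γ))) hx (by linarith) (by linarith))
    refine ⟨c1, ?_⟩
    rw [e1]
    refine ⟨c2, ?_⟩
    rw [s2]
    refine ⟨c3, ?_⟩
    rw [s3]
    change _ = _
    ring

/-- The domain of `T`, translated by `s`, lies in the domain of the new transformation. -/
theorem shift_mem (hk : 1 ≤ k) (hα : 0 < α) (hβ : 0 < β) (hγ : 0 < γ) (hJ : HalfOpen J)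
    {x : ℝ} (hx : x ∈ J 0 (α + β + γ)) :
    x + (((k : ℝ) - 1) * α + (k : ℝ) * β + γ) ∈
      J 0 (γ + ((k : ℝ) * α + ((k : ℝ) + 1) * β) +
        (((k : ℝ) - 1) * α + (k : ℝ) * β + 2 * γ)) := by
  have hk' : (1 : ℝ) ≤ k := by exact_mod_cast hk
  have h1 : 1 * α ≤ (k : ℝ) * α := by gcongr
  have h2 : 1 * β ≤ (k : ℝ) * β := by gcongr
  exact hJ.shift _ hx (by linarith) (by linarith)

theorem phiK_ne_nil (k : ℕ) (l : Letter) : phiK k l ≠ [] := by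
  cases l <;> simp [phiK]

/-- The blocks of an image word cover all positions. -/
theorem exists_block {c : ℤ → ℤ} {len : ℤ → ℕ} (h0 : c 0 = 0)
    (hc : ∀ m, c (m + 1) = c m + len m) (hlen : ∀ m, 0 < len m) (n : ℤ) :
    ∃ (m : ℤ) (i : ℕ), i < len m ∧ n = c m + i := by
  induction n using Int.induction_on with
  | zero => exact ⟨0, 0, hlen 0, by simp [h0]⟩
  | succ n ih =>
    obtain ⟨m, i, hi, e⟩ := ih
    by_cases h : i + 1 < len m
    · exact ⟨m, i + 1, h, by push_cast; omega⟩
    · refine ⟨m + 1, 0, hlen _, ?_⟩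
      rw [hc]
      push_cast
      omega
  | pred n ih =>
    obtain ⟨m, i, hi, e⟩ := ih
    by_cases h : 0 < i
    · exact ⟨m, i - 1, by omega, by omega⟩
    · have h1 := hc (m - 1)
      rw [sub_add_cancel] at h1
      have h2 := hlen (m - 1)
      exact ⟨m - 1, len (m - 1) - 1, by omega, by omega⟩

/-- The image under `φ_k` of the word coding the orbit of `x` codes the orbit of `x + s` under the
new transformation, in either convention. -/
theorem image_eq (hk : 1 ≤ k) (hα : 0 < α) (hβ : 0 < β) (hγ : 0 < γ) (hJ : HalfOpen J)
    (hT : IsIET J α β γ T Ti code)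
    (hS : IsIET J γ ((k : ℝ) * α + ((k : ℝ) + 1) * β)
      (((k : ℝ) - 1) * α + (k : ℝ) * β + 2 * γ) S Si code')
    {x : ℝ} (hx : x ∈ J 0 (α + β + γ)) {v : ℤ → Letter}
    (hv : IsImageWord (phiK k) (fun n => code (zIter T Ti n x)) v) :
    v = fun n => code' (zIter S Si n (x + (((k : ℝ) - 1) * α + (k : ℝ) * β + γ))) := by
  obtain ⟨c, h0, hc, hv⟩ := hv
  set s : ℝ := ((k : ℝ) - 1) * α + (k : ℝ) * β + γ with hs
  have hxs := shift_mem hk hα hβ hγ hJ hx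
  rw [← hs] at hxs
  have hR : ∀ m : ℤ, Reads S code' (phiK k (code (zIter T Ti m x))) (zIter T Ti m x + s)
      (zIter T Ti (m + 1) x + s) := by
    intro m
    rw [zIter_succ hT hx]
    exact reads_phiK hk hα hβ hγ hJ hT hS (zIter_mem hT hx m)
  have key : ∀ m : ℤ, zIter S Si (c m) (x + s) = zIter T Ti m x + s := by
    intro m
    induction m using Int.induction_on with
    | zero => rw [h0]; rfl
    | succ n ih => rw [hc, zIter_add_nat hS hxs, ih, (hR n).iterate]
    | pred n ih =>
      have h1 := hc (-n - 1)
      have h2 := hR (-n - 1)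
      rw [sub_add_cancel] at h1 h2
      -- Both points reach `zIter T Ti (-n) x + s` after the same number of steps of `S`.
      refine iterate_inj hS (phiK k (code (zIter T Ti (-n - 1) x))).length
        (zIter_mem hS hxs _) (shift_mem hk hα hβ hγ hJ (zIter_mem hT hx _)) ?_
      rw [← zIter_add_nat hS hxs, ← h1, ih, h2.iterate]
  funext n
  obtain ⟨m, i, hi, rfl⟩ := exists_block h0 hc
    (fun m => List.length_pos_iff.mpr (phiK_ne_nil k _)) n
  rw [hv m i hi, zIter_add_nat hS hxs, key, (hR m).get i hi]

end Induced

theorem linInd_new {α β γ : ℝ} (k : ℕ) (h : LinearIndependent ℚ ![α + β, β + γ]) :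
    LinearIndependent ℚ ![γ + ((k : ℝ) * α + ((k : ℝ) + 1) * β),
      ((k : ℝ) * α + ((k : ℝ) + 1) * β) + (((k : ℝ) - 1) * α + (k : ℝ) * β + 2 * γ)] := by
  rw [LinearIndependent.pair_iff] at h ⊢
  intro p q hpq
  simp only [Rat.smul_def] at h hpq
  obtain ⟨h1, h2⟩ := h (p * k + q * (2 * k - 1)) (p + 2 * q) (by
    push_cast
    linear_combination hpq)
  have hq : q = 0 := by linear_combination (k : ℚ) * h2 - h1
  refine ⟨?_, hq⟩
  linear_combination h2 - 2 * hq

/-- For every k ≥ 1, the morphism φ_k is 3iet preserving; specifically, it maps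
the coding word of x₀ under the left-closed 3iet with parameters (α,β,γ) to the
coding word of x₀ + (k−1)α + kβ + γ under the left-closed 3iet with parameters
(γ, kα+(k+1)β, (k−1)α+kβ+2γ). -/
theorem phiK_preserves_3iet (k : ℕ) (hk : 1 ≤ k) :
    Preserves3iet (phiK k) ∧
    ∀ α β γ x₀ : ℝ, 0 < α → 0 < β → 0 < γ →
      LinearIndependent ℚ ![α + β, β + γ] →
      x₀ ∈ Set.Ico (0 : ℝ) (α + β + γ) →
      ∀ v : ℤ → Letter, IsImageWord (phiK k) (uLeft α β γ x₀) v →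
        v = uLeft γ ((k : ℝ) * α + ((k : ℝ) + 1) * β)
              (((k : ℝ) - 1) * α + (k : ℝ) * β + 2 * γ)
              (x₀ + (((k : ℝ) - 1) * α + (k : ℝ) * β + γ)) := by
  have hk' : (1 : ℝ) ≤ k := by exact_mod_cast hk
  have posb : ∀ {α β : ℝ}, 0 < α → 0 < β → 0 < (k : ℝ) * α + ((k : ℝ) + 1) * β := by
    intro α β hα hβ
    positivity
  have posc : ∀ {α β γ : ℝ}, 0 < α → 0 < β → 0 < γ →
      0 < ((k : ℝ) - 1) * α + (k : ℝ) * β + 2 * γ := by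
    intro α β γ hα hβ hγ
    have : 0 ≤ ((k : ℝ) - 1) * α := mul_nonneg (by linarith) hα.le
    positivity
  refine ⟨⟨phiK_ne_nil k, ?_⟩, ?_⟩
  · rintro u v ⟨α, β, γ, x₀, hα, hβ, hγ, hli, ⟨hx, rfl⟩ | ⟨hx, rfl⟩⟩ hv
    · exact ⟨_, _, _, _, hγ, posb hα hβ, posc hα hβ hγ, linInd_new k hli,
        Or.inl ⟨shift_mem hk hα hβ hγ halfOpen_Ico hx,
          image_eq hk hα hβ hγ halfOpen_Ico (isIET_left hα hβ hγ)
            (isIET_left hγ (posb hα hβ) (posc hα hβ hγ)) hx hv⟩⟩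
    · exact ⟨_, _, _, _, hγ, posb hα hβ, posc hα hβ hγ, linInd_new k hli,
        Or.inr ⟨shift_mem hk hα hβ hγ halfOpen_Ioc hx,
          image_eq hk hα hβ hγ halfOpen_Ioc (isIET_right hα hβ hγ)
            (isIET_right hγ (posb hα hβ) (posc hα hβ hγ)) hx hv⟩⟩
  · intro α β γ x₀ hα hβ hγ _ hx v hv
    exact image_eq hk hα hβ hγ halfOpen_Ico (isIET_left hα hβ hγ)
      (isIET_left hγ (posb hα hβ) (posc hα hβ hγ)) hx hv
end

section
/- The units of the monoid Φ_3iet of 3iet preserving morphisms (under composition) are exactly the identity morphism and the morphism ξ given by ξ(A)=C, ξ(B)=B, ξ(C)=A. In particular, ξ ∈ Φ_3iet and ξ ∘ ξ is the identity morphism. -/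
/-- Composition of morphisms: `compM φ ψ` is the morphism φ ∘ ψ,
sending a letter a to the image under φ of the word ψ(a). -/
def compM (φ ψ : Morph) : Morph := fun a => ((ψ a).map φ).flatten

/-- The identity morphism. -/
def idM : Morph := fun a => [a]

/-- The morphism ξ : A ↦ C, B ↦ B, C ↦ A. -/
def xiM : Morph
  | Letter.A => [Letter.C]
  | Letter.B => [Letter.B]
  | Letter.C => [Letter.A]

/-- U is a unit of the monoid Φ_3iet of 3iet preserving morphisms: U ∈ Φ_3iet
and for every φ ∈ Φ_3iet there are B, C ∈ Φ_3iet with φ = B ∘ U and φ = U ∘ C. -/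
def IsUnitMorph (U : Morph) : Prop :=
  Preserves3iet U ∧ ∀ φ : Morph, Preserves3iet φ →
    (∃ B : Morph, Preserves3iet B ∧ φ = compM B U) ∧
    (∃ C : Morph, Preserves3iet C ∧ φ = compM U C)

/-! ### The letter swap and the reflection of the interval -/

/-- The exchange of `A` and `C` as a map on letters; it induces the morphism `xiM`. -/
def xiL : Letter → Letter
  | Letter.A => Letter.C
  | Letter.B => Letter.B
  | Letter.C => Letter.A

theorem xiL_xiL (a : Letter) : xiL (xiL a) = a := by cases a <;> rfl

theorem xiM_eq (a : Letter) : xiM a = [xiL a] := by cases a <;> rfl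

theorem zIter_conj {f g f' g' r : ℝ → ℝ} (hf : ∀ x, f' (r x) = r (f x))
    (hg : ∀ x, g' (r x) = r (g x)) (n : ℤ) (x : ℝ) :
    zIter f' g' n (r x) = r (zIter f g n x) := by
  have key : ∀ {p q : ℝ → ℝ}, (∀ x, q (r x) = r (p x)) → ∀ k : ℕ, q^[k] (r x) = r (p^[k] x) :=
    fun h k => ((Function.Semiconj.iterate_right (fun y => (h y).symm) k) x).symm
  cases n with
  | ofNat n => exact key hf n
  | negSucc n => exact key hg (n + 1)

theorem uRight_reflect (α β γ x : ℝ) (hβ : 0 < β) (n : ℤ) :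
    uRight γ β α (α + β + γ - x) n = xiL (uLeft α β γ x n) := by
  unfold uRight uLeft
  rw [zIter_conj (f := Tleft α β γ) (g := TleftInv α β γ) (r := fun x => α + β + γ - x)]
  · simp only [codeRight, codeLeft]
    split_ifs <;> first | rfl | (exfalso; linarith)
  · intro y
    simp only [Tright, Tleft]
    split_ifs <;> linarith
  · intro y
    simp only [TrightInv, TleftInv]
    split_ifs <;> linarith

theorem uLeft_reflect (α β γ x : ℝ) (hβ : 0 < β) (n : ℤ) :
    uLeft γ β α (α + β + γ - x) n = xiL (uRight α β γ x n) := by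
  have h := uRight_reflect γ β α (α + β + γ - x) hβ n
  rw [show γ + β + α - (α + β + γ - x) = x by ring] at h
  rw [h, xiL_xiL]

theorem is3iet_xi {u : ℤ → Letter} (hu : Is3ietWord u) : Is3ietWord (fun n => xiL (u n)) := by
  obtain ⟨α, β, γ, x, hα, hβ, hγ, hlin, h⟩ := hu
  refine ⟨γ, β, α, α + β + γ - x, hγ, hβ, hα, ?_, ?_⟩
  · rw [add_comm γ β, add_comm β α]
    exact LinearIndependent.pair_symm_iff.mp hlin
  · rcases h with ⟨⟨h0, h1⟩, rfl⟩ | ⟨⟨h0, h1⟩, rfl⟩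
    · refine Or.inr ⟨⟨by linarith, by linarith⟩, ?_⟩
      funext n
      exact (uRight_reflect α β γ x hβ n).symm
    · refine Or.inl ⟨⟨by linarith, by linarith⟩, ?_⟩
      funext n
      exact (uLeft_reflect α β γ x hβ n).symm

/-! ### Letter-to-letter morphisms and composition with ξ -/

theorem isImageWord_letter {φ : Morph} {σ : Letter → Letter} (hφ : ∀ a, φ a = [σ a])
    (u v : ℤ → Letter) : IsImageWord φ u v ↔ v = fun n => σ (u n) := by
  constructor
  · rintro ⟨c, h0, hs, hv⟩
    have hs' : ∀ m, c (m + 1) = c m + 1 := fun m => by rw [hs m, hφ]; simp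
    have hc : ∀ m : ℤ, c m = m := by
      intro m
      induction m using Int.induction_on with
      | zero => exact h0
      | succ i ih => rw [hs', ih]
      | pred i ih =>
        have h := hs' (-(i : ℤ) - 1)
        rw [sub_add_cancel, ih] at h
        omega
    funext m
    have h := hv m 0 (by rw [hφ]; simp)
    rw [hc] at h
    simpa [hφ] using h
  · rintro rfl
    refine ⟨id, rfl, fun m => by simp [hφ], fun m i hi => ?_⟩
    have hi0 : i = 0 := by simpa [hφ] using hi
    subst hi0
    simp [hφ]

theorem preserves_id : Preserves3iet idM := by
  refine ⟨fun a => by simp [idM], fun u v hu hv => ?_⟩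
  rw [isImageWord_letter (φ := idM) (σ := fun a => a) (fun a => rfl)] at hv
  exact hv ▸ hu

theorem preserves_xi : Preserves3iet xiM := by
  refine ⟨fun a => by simp [xiM_eq], fun u v hu hv => ?_⟩
  rw [isImageWord_letter xiM_eq] at hv
  exact hv ▸ is3iet_xi hu

theorem comp_xi_right (φ : Morph) (a : Letter) : compM φ xiM a = φ (xiL a) := by
  simp [compM, xiM_eq]

theorem comp_xi_left (φ : Morph) (a : Letter) : compM xiM φ a = (φ a).map xiL := by
  have h : xiM = fun a => [xiL a] := funext xiM_eq
  simp only [compM, h]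
  induction φ a with
  | nil => rfl
  | cons b l ih => simp [ih]

theorem preserves_comp_xi_right {φ : Morph} (hφ : Preserves3iet φ) :
    Preserves3iet (compM φ xiM) := by
  refine ⟨fun a => by rw [comp_xi_right]; exact hφ.1 _, fun u v hu hv => ?_⟩
  refine hφ.2 (fun n => xiL (u n)) v (is3iet_xi hu) ?_
  have h : compM φ xiM = fun a => φ (xiL a) := funext (comp_xi_right φ)
  rw [h] at hv
  exact hv

theorem preserves_comp_xi_left {φ : Morph} (hφ : Preserves3iet φ) :
    Preserves3iet (compM xiM φ) := by
  have h : compM xiM φ = fun a => (φ a).map xiL := funext (comp_xi_left φ)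
  rw [h]
  refine ⟨fun a => by simpa using hφ.1 a, fun u v hu hv => ?_⟩
  have hw : Is3ietWord (fun n => xiL (v n)) := by
    refine hφ.2 u _ hu ?_
    obtain ⟨c, h0, hs, hc⟩ := hv
    refine ⟨c, h0, fun m => by simpa using hs m, fun m i hi => ?_⟩
    have h1 := hc m i (by simpa using hi)
    simp only [h1]
    simp [xiL_xiL]
  have h2 := is3iet_xi hw
  simpa only [xiL_xiL] using h2

theorem xi_xi : compM xiM xiM = idM := by
  funext a
  cases a <;> rfl

/-! ### The square obstruction -/

theorem Tleft_mem {α β γ x : ℝ} (hα : 0 < α) (hβ : 0 < β) (hγ : 0 < γ)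
    (hx : 0 ≤ x ∧ x < α + β + γ) :
    0 ≤ Tleft α β γ x ∧ Tleft α β γ x < α + β + γ := by
  obtain ⟨h0, h1⟩ := hx
  unfold Tleft
  split_ifs <;> constructor <;> linarith

/-- In the left-closed convention, the first four letters are never `AAyz` with `y, z ≠ A`. -/
theorem word_AA_left {α β γ x : ℝ} (hα : 0 < α) (hβ : 0 < β) (hγ : 0 < γ)
    (hx : x ∈ Set.Ico (0 : ℝ) (α + β + γ))
    (h0 : uLeft α β γ x 0 = Letter.A) (h1 : uLeft α β γ x 1 = Letter.A)
    (h2 : uLeft α β γ x 2 ≠ Letter.A) (h3 : uLeft α β γ x 3 ≠ Letter.A) : False := by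
  obtain ⟨hx0, hx1⟩ := hx
  have m1 := Tleft_mem hα hβ hγ ⟨hx0, hx1⟩
  obtain ⟨m2, m2'⟩ := Tleft_mem hα hβ hγ m1
  change codeLeft α β x = _ at h0
  change codeLeft α β (Tleft α β γ x) = _ at h1
  change codeLeft α β (Tleft α β γ (Tleft α β γ x)) ≠ _ at h2
  change codeLeft α β (Tleft α β γ (Tleft α β γ (Tleft α β γ x))) ≠ _ at h3
  have lt : ∀ y, codeLeft α β y = Letter.A ↔ y < α := by
    intro y; unfold codeLeft; split_ifs <;> simp_all
  rw [lt] at h0 h1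
  rw [ne_eq, lt] at h2 h3
  rw [Tleft, if_pos h0] at h1
  generalize Tleft α β γ (Tleft α β γ x) = z at *
  apply h3
  unfold Tleft
  split_ifs <;> linarith

/-- In the left-closed convention, the first four letters are never `CCyz` with `y, z ≠ C`. -/
theorem word_CC_left {α β γ x : ℝ} (hα : 0 < α) (hβ : 0 < β) (hγ : 0 < γ)
    (hx : x ∈ Set.Ico (0 : ℝ) (α + β + γ))
    (h0 : uLeft α β γ x 0 = Letter.C) (h1 : uLeft α β γ x 1 = Letter.C)
    (h2 : uLeft α β γ x 2 ≠ Letter.C) (h3 : uLeft α β γ x 3 ≠ Letter.C) : False := by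
  obtain ⟨hx0, hx1⟩ := hx
  have m1 := Tleft_mem hα hβ hγ ⟨hx0, hx1⟩
  obtain ⟨m2, m2'⟩ := Tleft_mem hα hβ hγ m1
  change codeLeft α β x = _ at h0
  change codeLeft α β (Tleft α β γ x) = _ at h1
  change codeLeft α β (Tleft α β γ (Tleft α β γ x)) ≠ _ at h2
  change codeLeft α β (Tleft α β γ (Tleft α β γ (Tleft α β γ x))) ≠ _ at h3
  have le : ∀ y, codeLeft α β y = Letter.C ↔ α + β ≤ y := by
    intro y
    unfold codeLeft
    split_ifs
    · simp; linarith
    · simpa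
    · simpa using by linarith
  rw [le] at h0 h1
  rw [ne_eq, le] at h2 h3
  rw [Tleft, if_neg (by linarith), if_neg (by linarith)] at h1
  generalize Tleft α β γ (Tleft α β γ x) = z at *
  apply h3
  unfold Tleft
  split_ifs <;> linarith

/-- A 3iet word does not have `AAyz` with `y, z ≠ A` at positions `0` to `3`. The right-closed case
follows from the left-closed one by reflection, which turns `AA` into
`CC`. -/
theorem word_AA {u : ℤ → Letter} (hu : Is3ietWord u) (h0 : u 0 = Letter.A) (h1 : u 1 = Letter.A)
    (h2 : u 2 ≠ Letter.A) (h3 : u 3 ≠ Letter.A) : False := by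
  obtain ⟨α, β, γ, x, hα, hβ, hγ, -, ⟨hx, rfl⟩ | ⟨⟨hx0, hx1⟩, rfl⟩⟩ := hu
  · exact word_AA_left hα hβ hγ hx h0 h1 h2 h3
  · have hC : ∀ a, a ≠ Letter.A → xiL a ≠ Letter.C := by intro a; cases a <;> simp [xiL]
    refine word_CC_left (α := γ) (β := β) (γ := α) (x := α + β + γ - x) hγ hβ hα
      ⟨by linarith, by linarith⟩ ?_ ?_ ?_ ?_ <;> rw [uLeft_reflect _ _ _ _ hβ]
    · rw [h0]; rfl
    · rw [h1]; rfl
    · exact hC _ h2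
    · exact hC _ h3

theorem word_CC {u : ℤ → Letter} (hu : Is3ietWord u) (h0 : u 0 = Letter.C) (h1 : u 1 = Letter.C)
    (h2 : u 2 ≠ Letter.C) (h3 : u 3 ≠ Letter.C) : False := by
  have hA : ∀ a, a ≠ Letter.C → xiL a ≠ Letter.A := by intro a; cases a <;> simp [xiL]
  exact word_AA (is3iet_xi hu) (by rw [h0]; rfl) (by rw [h1]; rfl) (hA _ h2) (hA _ h3)

theorem linIndep_sqrt_two : LinearIndependent ℚ ![√2 + 1, (1 : ℝ) + 1] := by
  rw [LinearIndependent.pair_iff]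
  intro s t h
  simp only [Rat.smul_def] at h
  have hs : s = 0 := by
    by_contra hs
    have hs' : (s : ℝ) ≠ 0 := by exact_mod_cast hs
    apply irrational_sqrt_two
    refine ⟨-(s + 2 * t) / s, ?_⟩
    push_cast
    rw [div_eq_iff hs']
    linarith
  subst hs
  refine ⟨rfl, ?_⟩
  have : (t : ℝ) = 0 := by push_cast at h; linarith
  exact_mod_cast this

theorem exists_word_BBAC : ∃ u, Is3ietWord u ∧ u 0 = Letter.B ∧ u 1 = Letter.B ∧
    u 2 = Letter.A ∧ u 3 = Letter.C := by
  have l : (1.4 : ℝ) < √2 := Real.lt_sqrt_of_sq_lt (by norm_num)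
  have r : √2 < (1.5 : ℝ) := (Real.sqrt_lt' (by norm_num)).mpr (by norm_num)
  -- The orbit of `2`: each step on `B` subtracts `√2 - 1`, the step on `A` adds `2`.
  have t0 : Tleft (√2) 1 1 2 = 3 - √2 := by
    rw [Tleft, if_neg (by linarith), if_pos (by linarith)]; ring
  have t1 : Tleft (√2) 1 1 (3 - √2) = 4 - 2 * √2 := by
    rw [Tleft, if_neg (by linarith), if_pos (by linarith)]; ring
  have t2 : Tleft (√2) 1 1 (4 - 2 * √2) = 6 - 2 * √2 := by
    rw [Tleft, if_pos (by linarith)]; ring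
  refine ⟨uLeft (√2) 1 1 2, ⟨√2, 1, 1, 2, by linarith, one_pos, one_pos, linIndep_sqrt_two,
    Or.inl ⟨⟨by norm_num, by linarith⟩, rfl⟩⟩, ?_, ?_, ?_, ?_⟩
  · change codeLeft (√2) 1 2 = _
    rw [codeLeft, if_neg (by linarith), if_pos (by linarith)]
  · change codeLeft (√2) 1 (Tleft (√2) 1 1 2) = _
    rw [t0, codeLeft, if_neg (by linarith), if_pos (by linarith)]
  · change codeLeft (√2) 1 (Tleft (√2) 1 1 (Tleft (√2) 1 1 2)) = _
    rw [t0, t1, codeLeft, if_pos (by linarith)]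
  · change codeLeft (√2) 1 (Tleft (√2) 1 1 (Tleft (√2) 1 1 (Tleft (√2) 1 1 2))) = _
    rw [t0, t1, t2, codeLeft, if_neg (by linarith), if_neg (by linarith)]

/-! ### Units -/

/-- A left-invertible morphism, with nonerasing left inverse, maps letters injectively to letters. -/
theorem letter_of_left_inverse {U V : Morph} (hV : ∀ a, V a ≠ []) (h : idM = compM V U) :
    ∃ σ : Letter → Letter, Function.Injective σ ∧ ∀ a, U a = [σ a] := by
  have key : ∀ a, ∃ b, U a = [b] := by
    intro a
    have ha : [a] = ((U a).map V).flatten := congrFun h a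
    match hU : U a with
    | [] => simp [hU] at ha
    | [b] => exact ⟨b, rfl⟩
    | b :: c :: l =>
      exfalso
      have hl := congrArg List.length ha
      have hb := List.length_pos_iff.mpr (hV b)
      have hc := List.length_pos_iff.mpr (hV c)
      simp only [hU, List.map_cons, List.flatten_cons, List.length_append, List.length_cons,
        List.length_nil] at hl
      omega
  choose σ hσ using key
  refine ⟨σ, fun a b hab => ?_, hσ⟩
  have ha : [a] = ((U a).map V).flatten := congrFun h a
  have hb : [b] = ((U b).map V).flatten := congrFun h b
  rw [hσ, hab, ← hσ, ← hb] at ha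
  simpa using ha

theorem fixes_B {U : Morph} (hU : Preserves3iet U) {σ : Letter → Letter}
    (hi : Function.Injective σ) (hσ : ∀ a, U a = [σ a]) : σ Letter.B = Letter.B := by
  obtain ⟨u, hu, h0, h1, h2, h3⟩ := exists_word_BBAC
  have hw := hU.2 u _ hu ((isImageWord_letter hσ u _).mpr rfl)
  have hA : σ Letter.A ≠ σ Letter.B := fun h => by simpa using hi h
  have hC : σ Letter.C ≠ σ Letter.B := fun h => by simpa using hi h
  cases hB : σ Letter.B with
  | A =>
    rw [hB] at hA hC
    exact (word_AA hw (by simp only [h0, hB]) (by simp only [h1, hB]) (by simpa only [h2])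
      (by simpa only [h3])).elim
  | B => rfl
  | C =>
    rw [hB] at hA hC
    exact (word_CC hw (by simp only [h0, hB]) (by simp only [h1, hB]) (by simpa only [h2])
      (by simpa only [h3])).elim

theorem unit_eq {U : Morph} (hU : IsUnitMorph U) : U = idM ∨ U = xiM := by
  obtain ⟨V, hV, h⟩ := (hU.2 idM preserves_id).1
  obtain ⟨σ, hi, hσ⟩ := letter_of_left_inverse hV.1 h
  have hB := fixes_B hU.1 hi hσ
  have hA : σ Letter.A ≠ σ Letter.B := fun h => by simpa using hi h
  have hC : σ Letter.C ≠ σ Letter.B := fun h => by simpa using hi h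
  have hAC : σ Letter.A ≠ σ Letter.C := fun h => by simpa using hi h
  rw [hB] at hA hC
  clear h
  cases hA' : σ Letter.A <;> cases hC' : σ Letter.C <;> simp_all
  · left
    funext a
    cases a <;> simp [hσ, hA', hB, hC', idM]
  · right
    funext a
    cases a <;> simp [hσ, hA', hB, hC', xiM]

theorem isUnit_id : IsUnitMorph idM := by
  refine ⟨preserves_id, fun φ hφ => ⟨⟨φ, hφ, ?_⟩, ⟨φ, hφ, ?_⟩⟩⟩ <;> funext a
  · simp [compM, idM]
  · simp only [compM]
    induction φ a with
    | nil => rfl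
    | cons b l ih => simpa [idM] using ih

theorem isUnit_xi : IsUnitMorph xiM := by
  refine ⟨preserves_xi, fun φ hφ => ⟨⟨_, preserves_comp_xi_right hφ, ?_⟩,
    ⟨_, preserves_comp_xi_left hφ, ?_⟩⟩⟩ <;> funext a
  · rw [comp_xi_right, comp_xi_right, xiL_xiL]
  · rw [comp_xi_left, comp_xi_left, List.map_map]
    have h : xiL ∘ xiL = id := funext xiL_xiL
    simp [h]

/-- The units of the monoid of 3iet preserving morphisms are exactly the
identity morphism and ξ; in particular ξ is 3iet preserving and ξ ∘ ξ = id. -/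
theorem units_of_Phi3iet :
    Preserves3iet xiM ∧ compM xiM xiM = idM ∧
    ∀ U : Morph, IsUnitMorph U ↔ (U = idM ∨ U = xiM) := by
  refine ⟨preserves_xi, xi_xi, fun U => ⟨unit_eq, ?_⟩⟩
  rintro (rfl | rfl)
  · exact isUnit_id
  · exact isUnit_xi
end
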